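/- Chain rule for the quantum relative entropy: Let E, F : M_d(ℂ) → M_{d'}(ℂ) be quantum channels and let ρ, σ be states on ℂ^d. Then D(E(ρ)‖F(σ)) ≤ D(ρ‖σ) + D^reg(E‖F) in the extended reals. -/

import Mathlib

open scoped Kronecker ComplexOrder

noncomputable section

namespace QCD

attribute [local instance] Classical.propDecidable

variable {n m : Type} [Fintype n] [DecidableEq n] [Fintype m] [DecidableEq m]

/-- The real part of the trace of a complex matrix. -/
def rtr (A : Matrix n n ℂ) : ℝ := (A.trace).re

/-- A quantum state: positive semidefinite with trace one. -/
def IsState (ρ : Matrix n n ℂ) : Prop := ρ.PosSemidef ∧ ρ.trace = 1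

/-- Loewner order: `A ≤ B` iff `B - A` is positive semidefinite. -/
def loewnerLE (A B : Matrix n n ℂ) : Prop := (B - A).PosSemidef

/-- Support containment (for PSD matrices): `ker σ ⊆ ker ρ`. -/
def SuppLE (ρ σ : Matrix n n ℂ) : Prop := ∀ v : n → ℂ, σ.mulVec v = 0 → ρ.mulVec v = 0

/-- Functional calculus for Hermitian matrices (junk value `0` otherwise). -/
def matFun (f : ℝ → ℝ) (A : Matrix n n ℂ) : Matrix n n ℂ :=
  if hA : A.IsHermitian then
    (hA.eigenvectorUnitary : Matrix n n ℂ) *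
      Matrix.diagonal (fun i => (f (hA.eigenvalues i) : ℂ)) *
      (star (hA.eigenvectorUnitary : Matrix n n ℂ))
  else 0

/-- Matrix square root via functional calculus. -/
def msqrt (A : Matrix n n ℂ) : Matrix n n ℂ := matFun Real.sqrt A

/-- Matrix real power taken on the support (`0 ^ t := 0`). -/
def mpow (A : Matrix n n ℂ) (t : ℝ) : Matrix n n ℂ :=
  matFun (fun x => if x = 0 then 0 else x ^ t) A

/-- Matrix base-2 logarithm on the support. -/
def mlog (A : Matrix n n ℂ) : Matrix n n ℂ := matFun (Real.logb 2) A

/-- Positive part of a Hermitian matrix. -/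
def mposPart (A : Matrix n n ℂ) : Matrix n n ℂ := matFun (fun x => max x 0) A

/-- Trace norm. -/
def traceNorm (A : Matrix n m ℂ) : ℝ := rtr (msqrt (A.conjTranspose * A))

/-- Base-2 logarithm as an extended real (`⊥` on nonpositive input). -/
def elog (x : ℝ) : EReal := if x ≤ 0 then ⊥ else ((Real.logb 2 x : ℝ) : EReal)

/-- Base-2 logarithm of an extended real. -/
def elogE (x : EReal) : EReal := if x = ⊤ then ⊤ else elog x.toReal

/-- `2 ^ x` for an extended real `x`. -/
def epow2 (x : EReal) : EReal :=
  if x = ⊤ then ⊤ else if x = ⊥ then 0 else ((((2:ℝ) ^ x.toReal : ℝ)) : EReal)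

/-- Umegaki relative entropy (base 2), `⊤` if the support condition fails. -/
def relEntropy (ρ σ : Matrix n n ℂ) : EReal :=
  if SuppLE ρ σ then ((rtr (ρ * (mlog ρ - mlog σ)) : ℝ) : EReal) else ⊤

/-- Petz–Rényi divergence (base 2). -/
def petzRenyi (α : ℝ) (ρ σ : Matrix n n ℂ) : EReal :=
  if 1 < α ∧ ¬ SuppLE ρ σ then ⊤
  else (((α - 1)⁻¹ : ℝ) : EReal) * elog (rtr (mpow ρ α * mpow σ (1 - α)))

/-- Geometric (maximal) Rényi divergence (base 2). -/
def geomRenyi (α : ℝ) (ρ σ : Matrix n n ℂ) : EReal :=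
  if SuppLE ρ σ then
    (((α - 1)⁻¹ : ℝ) : EReal) *
      elog (rtr (σ * mpow (mpow σ (-(1/2 : ℝ)) * ρ * mpow σ (-(1/2 : ℝ))) α))
  else ⊤

/-- Max-relative entropy (base 2). -/
def dMax (ρ σ : Matrix n n ℂ) : EReal :=
  sInf {x : EReal | ∃ lam : ℝ, x = (lam : EReal) ∧ loewnerLE ρ ((((2:ℝ) ^ lam : ℝ) : ℂ) • σ)}

/-- Uhlmann fidelity. -/
def fidelity (ρ σ : Matrix n n ℂ) : ℝ := (rtr (msqrt (msqrt σ * ρ * msqrt σ))) ^ 2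

/-- Sine (purified) distance. -/
def sineDist (ρ σ : Matrix n n ℂ) : ℝ := Real.sqrt (1 - fidelity ρ σ)

/-- Smoothed max-relative entropy: smoothing over states in the sine-distance ball. -/
def dMaxSmooth (δ : ℝ) (ρ σ : Matrix n n ℂ) : EReal :=
  ⨅ (ρ' : Matrix n n ℂ) (_ : IsState ρ' ∧ sineDist ρ ρ' ≤ δ), dMax ρ' σ

/-- Hypothesis testing divergence (base 2). -/
def dH (ε : ℝ) (ρ σ : Matrix n n ℂ) : EReal :=
  - elog (sInf {x : ℝ | ∃ T : Matrix n n ℂ,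
      T.PosSemidef ∧ ((1 : Matrix n n ℂ) - T).PosSemidef ∧ 1 - ε ≤ rtr (T * ρ) ∧ x = rtr (T * σ)})

/-- The quantity `c_γ(ρ‖σ)`. -/
def cGamma (γ : ℝ) (ρ σ : Matrix n n ℂ) : EReal :=
  ((γ⁻¹ : ℝ) : EReal) *
    elogE (epow2 ((γ : ℝ) * petzRenyi (1 + γ) ρ σ) +
           epow2 (((-γ : ℝ) : EReal) * petzRenyi (1 - γ) ρ σ) + 1)

/-- Binary entropy (base 2). -/
def binEnt (x : ℝ) : ℝ := -(x * Real.logb 2 x) - (1 - x) * Real.logb 2 (1 - x)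

/-- Action of `id_k ⊗ Φ` on block matrices. -/
def blockApply {k : Type} (Φ : Matrix n n ℂ →ₗ[ℂ] Matrix m m ℂ)
    (M : Matrix (k × n) (k × n) ℂ) : Matrix (k × m) (k × m) ℂ :=
  Matrix.of fun p q => Φ (Matrix.of fun a b => M (p.1, a) (q.1, b)) p.2 q.2

/-- Action of `Φ ⊗ id_k` on block matrices. -/
def blockApplyRight {k : Type} (Φ : Matrix n n ℂ →ₗ[ℂ] Matrix m m ℂ)
    (M : Matrix (n × k) (n × k) ℂ) : Matrix (m × k) (m × k) ℂ :=
  Matrix.of fun p q => Φ (Matrix.of fun a b => M (a, p.2) (b, q.2)) p.1 q.1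

/-- Quantum channel: trace preserving and completely positive. -/
def IsQChannel (Φ : Matrix n n ℂ →ₗ[ℂ] Matrix m m ℂ) : Prop :=
  (∀ M : Matrix n n ℂ, (Φ M).trace = M.trace) ∧
  (∀ k : ℕ, 1 ≤ k → ∀ M : Matrix (Fin k × n) (Fin k × n) ℂ, M.PosSemidef →
    (blockApply Φ M).PosSemidef)

/-- `id_k ⊗ Φ` as a linear map. -/
def blockApplyL (k : Type) (Φ : Matrix n n ℂ →ₗ[ℂ] Matrix m m ℂ) :
    Matrix (k × n) (k × n) ℂ →ₗ[ℂ] Matrix (k × m) (k × m) ℂ where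
  toFun := blockApply Φ
  map_add' M N := by
    ext p q
    show Φ (Matrix.of fun a b => (M + N) (p.1, a) (q.1, b)) p.2 q.2 = _
    have h : (Matrix.of fun a b => (M + N) (p.1, a) (q.1, b)) =
        (Matrix.of fun a b => M (p.1, a) (q.1, b)) +
          (Matrix.of fun a b => N (p.1, a) (q.1, b)) := rfl
    rw [h, map_add]
    rfl
  map_smul' c M := by
    ext p q
    show Φ (Matrix.of fun a b => (c • M) (p.1, a) (q.1, b)) p.2 q.2 = _
    have h : (Matrix.of fun a b => (c • M) (p.1, a) (q.1, b)) =
        c • (Matrix.of fun a b => M (p.1, a) (q.1, b)) := rfl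
    rw [h, map_smul]
    rfl

/-- `Φ ⊗ id_k` as a linear map. -/
def blockApplyRightL (k : Type) (Φ : Matrix n n ℂ →ₗ[ℂ] Matrix m m ℂ) :
    Matrix (n × k) (n × k) ℂ →ₗ[ℂ] Matrix (m × k) (m × k) ℂ where
  toFun := blockApplyRight Φ
  map_add' M N := by
    ext p q
    show Φ (Matrix.of fun a b => (M + N) (a, p.2) (b, q.2)) p.1 q.1 = _
    have h : (Matrix.of fun a b => (M + N) (a, p.2) (b, q.2)) =
        (Matrix.of fun a b => M (a, p.2) (b, q.2)) +
          (Matrix.of fun a b => N (a, p.2) (b, q.2)) := rfl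
    rw [h, map_add]
    rfl
  map_smul' c M := by
    ext p q
    show Φ (Matrix.of fun a b => (c • M) (a, p.2) (b, q.2)) p.1 q.1 = _
    have h : (Matrix.of fun a b => (c • M) (a, p.2) (b, q.2)) =
        c • (Matrix.of fun a b => M (a, p.2) (b, q.2)) := rfl
    rw [h, map_smul]
    rfl

/-- Tensor product of two channels (Kronecker product action). -/
def tensorChannel {n₁ m₁ n₂ m₂ : Type}
    (E₁ : Matrix n₁ n₁ ℂ →ₗ[ℂ] Matrix m₁ m₁ ℂ) (E₂ : Matrix n₂ n₂ ℂ →ₗ[ℂ] Matrix m₂ m₂ ℂ) :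
    Matrix (n₁ × n₂) (n₁ × n₂) ℂ →ₗ[ℂ] Matrix (m₁ × m₂) (m₁ × m₂) ℂ :=
  (blockApplyRightL m₂ E₁).comp (blockApplyL n₁ E₂)

/-- Index type for `k`-fold tensor powers. -/
def tpow (ι : Type) : ℕ → Type
  | 0 => PUnit
  | (k+1) => tpow ι k × ι

def tpowFintype (ι : Type) [Fintype ι] : ∀ k : ℕ, Fintype (tpow ι k)
  | 0 => inferInstanceAs (Fintype PUnit)
  | (k+1) => letI := tpowFintype ι k; inferInstanceAs (Fintype (tpow ι k × ι))

instance (ι : Type) [Fintype ι] (k : ℕ) : Fintype (tpow ι k) := tpowFintype ι k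

def tpowDecEq (ι : Type) [DecidableEq ι] : ∀ k : ℕ, DecidableEq (tpow ι k)
  | 0 => inferInstanceAs (DecidableEq PUnit)
  | (k+1) => letI := tpowDecEq ι k; inferInstanceAs (DecidableEq (tpow ι k × ι))

instance (ι : Type) [DecidableEq ι] (k : ℕ) : DecidableEq (tpow ι k) := tpowDecEq ι k

/-- `k`-fold Kronecker tensor power of a matrix. -/
def tpowMat (ρ : Matrix n n ℂ) : ∀ k : ℕ, Matrix (tpow n k) (tpow n k) ℂ
  | 0 => 1
  | (k+1) => (tpowMat ρ k) ⊗ₖ ρ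

/-- `k`-fold tensor power of a channel. -/
def tpowChannel (Φ : Matrix n n ℂ →ₗ[ℂ] Matrix m m ℂ) :
    ∀ k : ℕ, Matrix (tpow n k) (tpow n k) ℂ →ₗ[ℂ] Matrix (tpow m k) (tpow m k) ℂ
  | 0 => LinearMap.id
  | (k+1) => tensorChannel (tpowChannel Φ k) Φ

/-- Channel divergence induced by a divergence `𝔇` on states:
sup over `k ≥ 1` and input states `ν` on `ℂ^k ⊗ ℂ^d`. -/
def chDiv (𝔇 : ∀ (p : Type) [Fintype p] [DecidableEq p], Matrix p p ℂ → Matrix p p ℂ → EReal)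
    (E F : Matrix n n ℂ →ₗ[ℂ] Matrix m m ℂ) : EReal :=
  ⨆ (k : ℕ) (_ : 1 ≤ k) (ν : Matrix (Fin k × n) (Fin k × n) ℂ) (_ : IsState ν),
    𝔇 (Fin k × m) (blockApply E ν) (blockApply F ν)

/-- The geometric Rényi divergence as a divergence family. -/
def geomD (α : ℝ) : ∀ (p : Type) [Fintype p] [DecidableEq p],
    Matrix p p ℂ → Matrix p p ℂ → EReal :=
  fun _ _ _ => geomRenyi α

/-- The Umegaki relative entropy as a divergence family. -/
def relD : ∀ (p : Type) [Fintype p] [DecidableEq p],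
    Matrix p p ℂ → Matrix p p ℂ → EReal :=
  fun _ _ _ => relEntropy

/-- The hypothesis testing divergence as a divergence family. -/
def dHD (ε : ℝ) : ∀ (p : Type) [Fintype p] [DecidableEq p],
    Matrix p p ℂ → Matrix p p ℂ → EReal :=
  fun _ _ _ => dH ε

/-- Regularized channel relative entropy. -/
def regRelEntropy (E F : Matrix n n ℂ →ₗ[ℂ] Matrix m m ℂ) : EReal :=
  ⨆ (k : ℕ) (_ : 1 ≤ k),
    (((k : ℝ)⁻¹ : ℝ) : EReal) * chDiv relD (tpowChannel E k) (tpowChannel F k)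

end QCD

/-!
By Gibbs' variational principle, bounding `D(E ρ ‖ F σ)` amounts to bounding the expectation in
`E ρ` of the observables `log θ - log (F σ)`. The law of large numbers shows that projecting
`ρ^⊗k` onto the typical subspaces of `log ρ` and of `log σ` yields states `ν` with
`ν ≤ 2 ^ (k (D(ρ ‖ σ) + ε)) σ^⊗k` which, by a gentle measurement estimate, give sums of one-copy
observables asymptotically the same mean per copy as `ρ^⊗k`, even after applying `E^⊗k`. Since
`D(E^⊗k ν ‖ F^⊗k ν) ≤ k D^reg(E ‖ F)` while `F^⊗k ν ≤ 2 ^ (k (D(ρ ‖ σ) + ε)) (F σ)^⊗k`, Gibbs'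
principle for `θ^⊗k` bounds the mean of `log θ - log (F σ)` by
`D(ρ ‖ σ) + ε + D^reg(E ‖ F) + log Tr θ`. The choice `θ = E ρ` gives the chain rule, once `σ`,
`F σ` and `E ρ` have been made invertible by adding small multiples of the identity.
-/

namespace QCD

open Matrix Filter Topology
open scoped MatrixOrder

variable {n m : Type}

section Spectral

variable [Fintype n] [DecidableEq n]

/-- The real diagonal matrices in the orthonormal basis formed by the columns of `U`: the
eigenvalue vector `a` is sent to `U diag(a) U*`. -/
def eigenHom (U : unitaryGroup n ℂ) : (n → ℝ) →⋆ₐ[ℝ] Matrix n n ℂ where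
  toFun a := U * diagonal (fun i => (a i : ℂ)) * star (U : Matrix n n ℂ)
  map_one' := by simp
  map_zero' := by simp
  map_mul' a b := by
    have h : diagonal (fun i => ((a * b) i : ℂ)) =
        diagonal (fun i => (a i : ℂ)) * (star (U : Matrix n n ℂ) * U) *
          diagonal (fun i => (b i : ℂ)) := by simp
    simp only [h, Matrix.mul_assoc]
  map_add' a b := by
    rw [← Matrix.add_mul, ← Matrix.mul_add, diagonal_add]
    simp
  commutes' c := by
    have h : diagonal (fun _ : n => (c : ℂ)) = (c : ℂ) • 1 := (smul_one_eq_diagonal _).symm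
    simp [h, Algebra.algebraMap_eq_smul_one]
  map_star' a := by
    simp [star_eq_conjTranspose, conjTranspose_mul, Matrix.mul_assoc, Pi.star_def]

lemma eigenHom_apply (U : unitaryGroup n ℂ) (a : n → ℝ) :
    eigenHom U a = U * diagonal (fun i => (a i : ℂ)) * star (U : Matrix n n ℂ) := rfl

lemma star_mul_eigenHom_mul (U : unitaryGroup n ℂ) (a : n → ℝ) :
    star (U : Matrix n n ℂ) * eigenHom U a * U = diagonal (fun i => (a i : ℂ)) := by
  simp [eigenHom_apply, ← Matrix.mul_assoc, Matrix.mul_assoc _ (star _) (U : Matrix n n ℂ)]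

lemma exists_eq_eigenHom {A : Matrix n n ℂ} (hA : A.IsHermitian) :
    ∃ (U : unitaryGroup n ℂ) (a : n → ℝ), A = eigenHom U a :=
  ⟨hA.eigenvectorUnitary, hA.eigenvalues, hA.spectral_theorem⟩

lemma isHermitian_eigenHom (U : unitaryGroup n ℂ) (a : n → ℝ) : (eigenHom U a).IsHermitian :=
  (IsSelfAdjoint.all a).map (eigenHom U)

lemma posSemidef_eigenHom {U : unitaryGroup n ℂ} {a : n → ℝ} :
    (eigenHom U a).PosSemidef ↔ 0 ≤ a := by
  rw [← IsUnit.posSemidef_star_left_conjugate_iff (Unitary.isUnit_coe (U := U)),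
    star_mul_eigenHom_mul, posSemidef_diagonal_iff]
  simp [Pi.le_def]

lemma posDef_eigenHom {U : unitaryGroup n ℂ} {a : n → ℝ} :
    (eigenHom U a).PosDef ↔ ∀ i, 0 < a i := by
  rw [← IsUnit.posDef_star_left_conjugate_iff (Unitary.isUnit_coe (U := U)),
    star_mul_eigenHom_mul, posDef_diagonal_iff]
  simp

lemma eigenHom_mono (U : unitaryGroup n ℂ) : Monotone (eigenHom U) := fun a b h => by
  rw [Matrix.le_iff, ← map_sub]
  exact posSemidef_eigenHom.2 (sub_nonneg.2 h)

lemma matFun_eq_cfc (f : ℝ → ℝ) (A : Matrix n n ℂ) : matFun f A = cfc f A := by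
  by_cases hA : A.IsHermitian
  · rw [matFun, dif_pos hA, hA.cfc_eq]
    rfl
  · rw [matFun, dif_neg hA, cfc_apply_of_not_predicate A fun h => hA h.isHermitian]

lemma matFun_map_starAlgHom {ι : Type} [Finite ι] (f : ℝ → ℝ) (φ : (ι → ℝ) →⋆ₐ[ℝ] Matrix n n ℂ)
    (a : ι → ℝ) : matFun f (φ a) = φ (f ∘ a) := by
  have := Fintype.ofFinite ι
  obtain ⟨p, hp⟩ : ∃ p : Polynomial ℝ, ∀ i, p.eval (a i) = f (a i) :=
    ⟨Lagrange.interpolate (Finset.univ.image a) id f, fun i =>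
      Lagrange.eval_interpolate_at_node (v := id) f (Set.injOn_id _)
        (Finset.mem_image_of_mem a (Finset.mem_univ i))⟩
  have hspec : (spectrum ℝ (φ a)).EqOn f p.eval := fun x hx => by
    obtain ⟨i, hi⟩ :=
      Set.mem_iUnion.1 (Pi.spectrum_eq (R := ℝ) a ▸ AlgHom.spectrum_apply_subset φ a hx)
    obtain rfl : x = a i := by simpa using (spectrum.scalar_eq (A := ℝ) (a i)).subset hi
    exact (hp i).symm
  have hpa : Polynomial.aeval a p = f ∘ a := funext fun i => by
    rw [Polynomial.aeval_pi_apply₂, Polynomial.coe_aeval_eq_eval]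
    exact hp i
  rw [matFun_eq_cfc, cfc_congr hspec, cfc_polynomial p _ ((IsSelfAdjoint.all a).map φ),
    Polynomial.aeval_algHom_apply, hpa]

omit [Fintype n] in
lemma exists_le_smul_one [Finite n] {A : Matrix n n ℂ} (hA : A.IsHermitian) :
    ∃ c : ℝ, 0 ≤ c ∧ A ≤ c • 1 := by
  have := Fintype.ofFinite n
  obtain ⟨U, a, rfl⟩ := exists_eq_eigenHom hA
  obtain ⟨c, hc⟩ := (Set.finite_range a).bddAbove
  refine ⟨max c 0, le_max_right _ _, ?_⟩
  rw [← map_one (eigenHom U), ← map_smul]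
  exact eigenHom_mono U fun i => by simp [hc ⟨i, rfl⟩]

end Spectral

section Trace

variable [Fintype n]

/-- `rtr` as an `ℝ`-linear functional. -/
def rtrLM : Matrix n n ℂ →ₗ[ℝ] ℝ := Complex.reLm ∘ₗ traceLinearMap n ℝ ℂ

lemma rtr_add (A B : Matrix n n ℂ) : rtr (A + B) = rtr A + rtr B := map_add rtrLM A B

lemma rtr_sub (A B : Matrix n n ℂ) : rtr (A - B) = rtr A - rtr B := map_sub rtrLM A B

lemma rtr_smul (c : ℝ) (A : Matrix n n ℂ) : rtr (c • A) = c * rtr A := map_smul rtrLM c A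

lemma rtr_mul_comm (A B : Matrix n n ℂ) : rtr (A * B) = rtr (B * A) := by
  rw [rtr, trace_mul_comm, rtr]

lemma ofReal_rtr {A : Matrix n n ℂ} (hA : A.IsHermitian) : (rtr A : ℂ) = A.trace := by
  refine Complex.conj_eq_iff_re.1 ?_
  rw [starRingEnd_apply, ← trace_conjTranspose, hA.eq]

lemma ofReal_rtr_mul {A B : Matrix n n ℂ} (hA : A.IsHermitian) (hB : B.IsHermitian) :
    (rtr (A * B) : ℂ) = (A * B).trace := by
  refine Complex.conj_eq_iff_re.1 ?_
  rw [starRingEnd_apply, ← trace_conjTranspose, conjTranspose_mul, hA.eq, hB.eq, trace_mul_comm]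

lemma rtr_nonneg {A : Matrix n n ℂ} (hA : 0 ≤ A) : 0 ≤ rtr A :=
  (Complex.le_def.1 hA.posSemidef.trace_nonneg).1

lemma IsState.nonneg {ρ : Matrix n n ℂ} (hρ : IsState ρ) : 0 ≤ ρ := hρ.1.nonneg

lemma IsState.rtr_eq_one {ρ : Matrix n n ℂ} (hρ : IsState ρ) : rtr ρ = 1 := by
  rw [rtr, hρ.2, Complex.one_re]

lemma rtr_mul_nonneg {A B : Matrix n n ℂ} (hA : 0 ≤ A) (hB : 0 ≤ B) : 0 ≤ rtr (A * B) := by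
  classical
  obtain ⟨C, rfl⟩ := CStarAlgebra.nonneg_iff_eq_star_mul_self.1 hB
  rw [← mul_assoc, rtr_mul_comm, ← mul_assoc]
  exact rtr_nonneg (star_right_conjugate_nonneg hA C)

lemma rtr_mul_le_mul_left {A B C : Matrix n n ℂ} (hA : 0 ≤ A) (h : B ≤ C) :
    rtr (A * B) ≤ rtr (A * C) := by
  rw [← sub_nonneg, ← rtr_sub, ← mul_sub]
  exact rtr_mul_nonneg hA (sub_nonneg.2 h)

variable [DecidableEq n]

/-- The weights of the outcomes when `X` is measured in the orthonormal basis formed by the columns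
of `U`, i.e. the diagonal of `X` in that basis. -/
def bornWeight (U : unitaryGroup n ℂ) (X : Matrix n n ℂ) (i : n) : ℝ :=
  ((star (U : Matrix n n ℂ) * X * U) i i).re

lemma bornWeight_nonneg (U : unitaryGroup n ℂ) {X : Matrix n n ℂ} (hX : 0 ≤ X) :
    0 ≤ bornWeight U X := fun _ =>
  (Complex.le_def.1 (star_left_conjugate_nonneg hX (U : Matrix n n ℂ)).posSemidef.diag_nonneg).1

lemma rtr_mul_eigenHom (X : Matrix n n ℂ) (U : unitaryGroup n ℂ) (a : n → ℝ) :
    rtr (X * eigenHom U a) = ∑ i, bornWeight U X i * a i := by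
  rw [eigenHom_apply, ← mul_assoc, rtr_mul_comm, ← mul_assoc, ← mul_assoc]
  simp [rtr, trace, bornWeight, mul_diagonal]

lemma sum_bornWeight (U : unitaryGroup n ℂ) (X : Matrix n n ℂ) :
    ∑ i, bornWeight U X i = rtr X := by
  simpa using (rtr_mul_eigenHom X U 1).symm

lemma rtr_eigenHom (U : unitaryGroup n ℂ) (a : n → ℝ) : rtr (eigenHom U a) = ∑ i, a i := by
  rw [← sum_bornWeight U]
  simp [bornWeight, star_mul_eigenHom_mul]

end Trace

section Logarithm

variable [Fintype n] [DecidableEq n]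

lemma mlog_eigenHom (U : unitaryGroup n ℂ) (a : n → ℝ) :
    mlog (eigenHom U a) = eigenHom U (Real.logb 2 ∘ a) :=
  matFun_map_starAlgHom _ _ _

open scoped Matrix.Norms.L2Operator in
lemma mlog_eq_smul_log (A : Matrix n n ℂ) : mlog A = (Real.log 2)⁻¹ • CFC.log A := by
  have := A.finite_real_spectrum
  rw [mlog, matFun_eq_cfc, CFC.log, ← cfc_smul _ _ A (this.continuousOn _)]
  congr 1 with x
  simp [Real.logb, div_eq_inv_mul]

open scoped Matrix.Norms.L2Operator in
lemma mlog_le_mlog {A B : Matrix n n ℂ} (hA : A.PosDef) (h : A ≤ B) : mlog A ≤ mlog B := by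
  rw [mlog_eq_smul_log, mlog_eq_smul_log]
  exact smul_le_smul_of_nonneg_left (CFC.log_le_log h (isStrictlyPositive_iff_posDef.2 hA))
    (by positivity)

lemma mlog_smul {A : Matrix n n ℂ} (hA : A.PosDef) {c : ℝ} (hc : 0 < c) :
    mlog (c • A) = Real.logb 2 c • 1 + mlog A := by
  obtain ⟨U, a, rfl⟩ := exists_eq_eigenHom hA.isHermitian
  have ha := posDef_eigenHom.1 hA
  rw [← map_smul, mlog_eigenHom, mlog_eigenHom, ← map_one (eigenHom U), ← map_smul, ← map_add]
  congr 1 with i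
  simp [Real.logb_mul hc.ne' (ha i).ne']

lemma isHermitian_mlog (A : Matrix n n ℂ) : (mlog A).IsHermitian := by
  rw [mlog, matFun_eq_cfc]
  exact cfc_predicate (p := IsSelfAdjoint) _ A

lemma map_normSq_mem_doublyStochastic (W : unitaryGroup n ℂ) :
    (W : Matrix n n ℂ).map Complex.normSq ∈ doublyStochastic ℝ n := by
  refine mem_doublyStochastic_iff_sum.2
    ⟨fun i j => Complex.normSq_nonneg _, fun i => ?_, fun j => ?_⟩
  · have h := congr_fun₂ (mem_unitaryGroup_iff.1 W.2) i i
    simp only [mul_apply, star_apply, RCLike.star_def, Complex.mul_conj, one_apply_eq] at h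
    exact_mod_cast h
  · have h := congr_fun₂ (mem_unitaryGroup_iff'.1 W.2) j j
    simp only [mul_apply, star_apply, RCLike.star_def, ← Complex.normSq_eq_conj_mul_self,
      one_apply_eq] at h
    exact_mod_cast h

lemma bornWeight_eigenHom (U V : unitaryGroup n ℂ) (p : n → ℝ) :
    bornWeight V (eigenHom U p) =
      p ᵥ* ((star U * V : unitaryGroup n ℂ) : Matrix n n ℂ).map Complex.normSq := by
  have h : star (V : Matrix n n ℂ) * eigenHom U p * V =
      star ((star U * V : unitaryGroup n ℂ) : Matrix n n ℂ) * diagonal (fun i => (p i : ℂ)) *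
        (star U * V : unitaryGroup n ℂ) := by
    simp [eigenHom_apply, star_mul, mul_assoc]
  ext j
  rw [bornWeight, h, mul_apply, Complex.re_sum]
  refine Finset.sum_congr rfl fun i _ => ?_
  simp only [mul_diagonal, star_apply, RCLike.star_def, Complex.mul_re, Complex.mul_im, map_apply,
    Complex.conj_re, Complex.conj_im, Complex.ofReal_re, Complex.ofReal_im, Complex.normSq_apply]
  ring

lemma mul_logb_le {p t T : ℝ} (hp : 0 ≤ p) (ht : 0 < t) (hT : 0 < T) :
    p * Real.logb 2 t ≤
      p * Real.logb 2 p + p * Real.logb 2 T + (t / T - p) / Real.log 2 := by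
  have hlog := Real.log_pos one_lt_two
  rcases hp.eq_or_lt with rfl | hp
  · simp only [zero_mul, zero_add, sub_zero]
    positivity
  have h : p * (Real.log t - (Real.log T + Real.log p)) ≤ t / T - p := by
    rw [← Real.log_mul hT.ne' hp.ne', ← Real.log_div ht.ne' (by positivity)]
    calc p * Real.log (t / (T * p)) ≤ p * (t / (T * p) - 1) := by
          gcongr; exact Real.log_le_sub_one_of_pos (by positivity)
      _ = t / T - p := by field_simp
  have h' := div_le_div_of_nonneg_right h hlog.le
  simp only [Real.logb]
  linear_combination h'

lemma sum_vecMul_mul_logb_le {M : Matrix n n ℝ} (hM : M ∈ doublyStochastic ℝ n) {p t : n → ℝ}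
    (hp : 0 ≤ p) (hp1 : ∑ i, p i = 1) (ht : ∀ j, 0 < t j) :
    ∑ j, (p ᵥ* M) j * Real.logb 2 (t j) ≤
      ∑ i, p i * Real.logb 2 (p i) + Real.logb 2 (∑ j, t j) := by
  obtain ⟨hM0, hrow, hcol⟩ := mem_doublyStochastic_iff_sum.1 hM
  set T := ∑ j, t j
  have : Nonempty n := by
    by_contra h
    simp [not_nonempty_iff.1 h] at hp1
  have hT : 0 < T := Finset.sum_pos (fun j _ => ht j) Finset.univ_nonempty
  calc ∑ j, (p ᵥ* M) j * Real.logb 2 (t j)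
      = ∑ i, ∑ j, M i j * (p i * Real.logb 2 (t j)) := by
        rw [Finset.sum_comm]
        simp only [vecMul, dotProduct, Finset.sum_mul]
        exact Finset.sum_congr rfl fun j _ => Finset.sum_congr rfl fun i _ => by ring
    _ ≤ ∑ i, ∑ j, M i j * (p i * Real.logb 2 (p i) + p i * Real.logb 2 T +
          (t j / T - p i) / Real.log 2) := by
        gcongr with i _ j _
        · exact hM0 i j
        · exact mul_logb_le (hp i) (ht j) hT
    _ = ∑ i, (∑ j, M i j) * (p i * Real.logb 2 (p i) + p i * Real.logb 2 T - p i / Real.log 2) +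
          ∑ j, (∑ i, M i j) * (t j / T / Real.log 2) := by
        simp only [Finset.sum_mul]
        rw [Finset.sum_comm (γ := n) (f := fun j i => M i j * _), ← Finset.sum_add_distrib]
        refine Finset.sum_congr rfl fun i _ => ?_
        rw [← Finset.sum_add_distrib]
        exact Finset.sum_congr rfl fun j _ => by ring
    _ = ∑ i, p i * Real.logb 2 (p i) + Real.logb 2 T := by
        simp only [hrow, hcol, one_mul, Finset.sum_add_distrib, Finset.sum_sub_distrib,
          ← Finset.sum_mul, ← Finset.sum_div, hp1]
        rw [div_self hT.ne']
        ring

lemma gibbs_variational {ω θ : Matrix n n ℂ} (hω : IsState ω) (hθ : θ.PosDef) :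
    rtr (ω * mlog θ) - rtr (ω * mlog ω) ≤ Real.logb 2 (rtr θ) := by
  obtain ⟨U, p, rfl⟩ := exists_eq_eigenHom hω.1.isHermitian
  obtain ⟨V, t, rfl⟩ := exists_eq_eigenHom hθ.isHermitian
  have hp1 : ∑ i, p i = 1 := by rw [← rtr_eigenHom U, hω.rtr_eq_one]
  have h := sum_vecMul_mul_logb_le (map_normSq_mem_doublyStochastic (star U * V))
    (posSemidef_eigenHom.1 hω.1) hp1 (posDef_eigenHom.1 hθ)
  rw [mlog_eigenHom, rtr_mul_eigenHom, bornWeight_eigenHom, mlog_eigenHom, ← map_mul, rtr_eigenHom,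
    rtr_eigenHom]
  exact sub_le_iff_le_add'.2 h

omit [DecidableEq n] in
lemma SuppLE.of_posDef {ω A : Matrix n n ℂ} (hA : A.PosDef) : SuppLE ω A := fun v hv => by
  classical
  rw [mulVec_injective_of_isUnit hA.isUnit (hv.trans (mulVec_zero A).symm), mulVec_zero]

lemma bornWeight_eq_zero_iff {X : Matrix n n ℂ} (hX : 0 ≤ X) (U : unitaryGroup n ℂ) (i : n) :
    bornWeight U X i = 0 ↔ X *ᵥ (U : Matrix n n ℂ).col i = 0 := by
  have h : (star (U : Matrix n n ℂ) * X * U) i i =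
      star ((U : Matrix n n ℂ).col i) ⬝ᵥ (X *ᵥ (U : Matrix n n ℂ).col i) := by
    rw [mul_assoc, mul_apply']
    rfl
  rw [← hX.posSemidef.dotProduct_mulVec_zero_iff, ← h, bornWeight, Complex.ext_iff]
  have him : 0 ≤ (star (U : Matrix n n ℂ) * X * U) i i :=
    (star_left_conjugate_nonneg hX (U : Matrix n n ℂ)).posSemidef.diag_nonneg
  simp [← (Complex.le_def.1 him).2]

lemma suppLE_eigenHom_iff {ω : Matrix n n ℂ} (hω : 0 ≤ ω) {U : unitaryGroup n ℂ} {a : n → ℝ} :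
    SuppLE ω (eigenHom U a) ↔ ∀ i, a i = 0 → bornWeight U ω i = 0 := by
  have hU := UnitaryGroup.star_mul_self U
  have hker (v : n → ℂ) :
      eigenHom U a *ᵥ v = 0 ↔ ∀ i, a i = 0 ∨ (star (U : Matrix n n ℂ) *ᵥ v) i = 0 := by
    rw [← (mulVec_injective_of_isUnit (Unitary.isUnit_coe (U := star U))).eq_iff, mulVec_zero,
      mulVec_mulVec]
    simp [eigenHom_apply, ← mul_assoc, ← mulVec_mulVec, funext_iff, mulVec_diagonal]
  simp_rw [bornWeight_eq_zero_iff hω, SuppLE, hker]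
  constructor
  · intro h i hi
    apply h
    intro j
    rw [← mulVec_single_one, mulVec_mulVec, hU, one_mulVec]
    by_cases hj : j = i
    · exact .inl (hj ▸ hi)
    · exact .inr (Pi.single_eq_of_ne hj 1)
  · intro h v hv
    have hexpand : v = ∑ i, (star (U : Matrix n n ℂ) *ᵥ v) i • (U : Matrix n n ℂ).col i := by
      conv_lhs => rw [← one_mulVec v, ← Unitary.coe_mul_star_self U, ← mulVec_mulVec, mulVec_eq_sum]
      simp only [op_smul_eq_smul]
      rfl
    rw [hexpand, mulVec_sum]
    refine Finset.sum_eq_zero fun i _ => ?_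
    rw [mulVec_smul]
    rcases hv i with hi | hi
    · rw [h i hi, smul_zero]
    · rw [hi, zero_smul]

omit [Fintype n] in
lemma posDef_add_smul_one {A : Matrix n n ℂ} (hA : 0 ≤ A) {η : ℝ} (hη : 0 < η) :
    (A + η • 1).PosDef :=
  (PosDef.one.smul hη).posSemidef_add hA.posSemidef

lemma rtr_mul_mlog_eigenHom_add (ω : Matrix n n ℂ) (U : unitaryGroup n ℂ) (a : n → ℝ) (η : ℝ) :
    rtr (ω * mlog (eigenHom U a + η • 1)) = ∑ i, bornWeight U ω i * Real.logb 2 (a i + η) := by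
  rw [← map_one (eigenHom U), ← map_smul, ← map_add, mlog_eigenHom, rtr_mul_eigenHom]
  simp

lemma tendsto_rtr_mul_mlog_add_smul {ω A : Matrix n n ℂ} (hω : 0 ≤ ω) (hA : 0 ≤ A)
    (h : SuppLE ω A) :
    Tendsto (fun η : ℝ => rtr (ω * mlog (A + η • 1))) (𝓝[>] 0) (𝓝 (rtr (ω * mlog A))) := by
  obtain ⟨U, a, rfl⟩ := exists_eq_eigenHom hA.posSemidef.isHermitian
  simp only [rtr_mul_mlog_eigenHom_add, mlog_eigenHom, rtr_mul_eigenHom]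
  refine tendsto_finsetSum _ fun i _ => ?_
  by_cases hi : a i = 0
  · simp [(suppLE_eigenHom_iff hω).1 h i hi]
  · have hcont : ContinuousAt (fun η => Real.logb 2 (a i + η)) 0 :=
      ContinuousAt.logb (by fun_prop) (by simpa using hi)
    simpa using (hcont.tendsto.mono_left nhdsWithin_le_nhds).const_mul (bornWeight U ω i)

lemma tendsto_rtr_mul_mlog_add_smul_atBot {ω A : Matrix n n ℂ} (hω : 0 ≤ ω) (hA : 0 ≤ A)
    (h : ¬ SuppLE ω A) :
    Tendsto (fun η : ℝ => rtr (ω * mlog (A + η • 1))) (𝓝[>] 0) atBot := by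
  obtain ⟨U, a, rfl⟩ := exists_eq_eigenHom hA.posSemidef.isHermitian
  obtain ⟨j, hj, hwj⟩ : ∃ j, a j = 0 ∧ bornWeight U ω j ≠ 0 := by
    simpa [suppLE_eigenHom_iff hω] using h
  have ha := posSemidef_eigenHom.1 hA.posSemidef
  have hw := bornWeight_nonneg U hω
  have hlim : Tendsto (fun η => bornWeight U ω j * Real.logb 2 η +
      ∑ i, bornWeight U ω i * Real.logb 2 (a i + 1)) (𝓝[>] 0) atBot :=
    tendsto_atBot_add_const_right _ _ ((Real.tendsto_logb_nhdsGT_zero one_lt_two).const_mul_atBot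
      ((hw j).lt_of_ne' hwj))
  refine tendsto_atBot_mono' _ ?_ hlim
  filter_upwards [Ioc_mem_nhdsGT one_pos] with η hη
  rw [rtr_mul_mlog_eigenHom_add, ← Finset.add_sum_erase _ _ (Finset.mem_univ j),
    ← Finset.add_sum_erase _ (fun i => _ * Real.logb 2 (a i + 1)) (Finset.mem_univ j)]
  simp only [hj, zero_add, Real.logb_one, mul_zero]
  gcongr with i
  · exact hw i
  · exact one_lt_two
  · exact add_pos_of_nonneg_of_pos (ha i) hη.1
  · exact hη.2

lemma rtr_mul_mlog_le_add_smul {ω A : Matrix n n ℂ} (hω : 0 ≤ ω) (hA : 0 ≤ A) (h : SuppLE ω A)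
    {η : ℝ} (hη : 0 < η) : rtr (ω * mlog A) ≤ rtr (ω * mlog (A + η • 1)) := by
  obtain ⟨U, a, rfl⟩ := exists_eq_eigenHom hA.posSemidef.isHermitian
  rw [rtr_mul_mlog_eigenHom_add, mlog_eigenHom, rtr_mul_eigenHom]
  refine Finset.sum_le_sum fun i _ => ?_
  rcases (posSemidef_eigenHom.1 hA.posSemidef i).eq_or_lt with hi | hi
  · simp [(suppLE_eigenHom_iff hω).1 h i hi.symm]
  · exact mul_le_mul_of_nonneg_left (Real.logb_le_logb_of_le one_lt_two hi (by simp [hη.le]))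
      (bornWeight_nonneg U hω i)

lemma rtr_mul_mlog_le_of_le {ω A B : Matrix n n ℂ} (hω : 0 ≤ ω) (hA : 0 ≤ A) (hB : B.PosDef)
    (h : SuppLE ω A) (hAB : A ≤ B) : rtr (ω * mlog A) ≤ rtr (ω * mlog B) := by
  refine ge_of_tendsto (tendsto_rtr_mul_mlog_add_smul hω hB.posSemidef.nonneg (.of_posDef hB)) ?_
  filter_upwards [self_mem_nhdsWithin] with η hη
  exact (rtr_mul_mlog_le_add_smul hω hA h hη).trans
    (rtr_mul_le_mul_left hω (mlog_le_mlog (posDef_add_smul_one hA hη) (by gcongr)))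

lemma relEntropy_le_of_tendsto {ω A : Matrix n n ℂ} (hω : 0 ≤ ω) (hA : 0 ≤ A) {g : ℝ → ℝ} {c : ℝ}
    (hg : Tendsto g (𝓝[>] 0) (𝓝 c))
    (h : ∀ η > 0, rtr (ω * mlog ω) - rtr (ω * mlog (A + η • 1)) ≤ g η) :
    relEntropy ω A ≤ c := by
  have hev : ∀ᶠ η in 𝓝[>] 0, rtr (ω * mlog ω) - rtr (ω * mlog (A + η • 1)) ≤ g η :=
    eventually_mem_of_tendsto_nhdsWithin tendsto_id |>.mono h
  by_cases hsupp : SuppLE ω A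
  · rw [relEntropy, if_pos hsupp, mul_sub, rtr_sub]
    exact EReal.coe_le_coe_iff.2 <| le_of_tendsto_of_tendsto
      ((tendsto_rtr_mul_mlog_add_smul hω hA hsupp).const_sub _) hg hev
  · refine absurd ?_ (not_tendsto_atBot_of_tendsto_nhds (hg.const_sub (rtr (ω * mlog ω))))
    refine tendsto_atBot_mono' _ ?_ (tendsto_rtr_mul_mlog_add_smul_atBot hω hA hsupp)
    filter_upwards [hev] with η hη using by linarith

end Logarithm

section GentleMeasurement

variable [Fintype n] [DecidableEq n]

-- The cross terms of `K ρ K⋆` are controlled by `0 ≤ f ((t + K - 1) ρ (t + K - 1)⋆)`.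
lemma le_map_mul_mul_star (f : Matrix n n ℂ →ₚ[ℝ] ℝ) {ρ : Matrix n n ℂ} (hρ : 0 ≤ ρ)
    (K : Matrix n n ℂ) {t : ℝ} (ht : 0 < t) :
    (1 - t) * f ρ - f ((K - 1) * ρ * star (K - 1)) / t ≤ f (K * ρ * star K) := by
  obtain ⟨J, rfl⟩ : ∃ J, K = (1 : ℝ) • 1 + J := ⟨K - 1, by simp⟩
  have hexp (s : ℝ) : f ((s • 1 + J) * ρ * star (s • 1 + J)) =
      s ^ 2 * f ρ + s * f (J * ρ + ρ * star J) + f (J * ρ * star J) := by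
    rw [← smul_eq_mul (s ^ 2), ← smul_eq_mul s, ← map_smul, ← map_smul, ← map_add, ← map_add]
    congr 1
    simp only [star_add, star_smul, star_one, add_mul, mul_add, smul_mul_assoc, mul_smul_comm,
      one_mul, mul_one, star_trivial]
    module
  have hJ : 0 ≤ f (J * ρ * star J) := f.map_nonneg (star_right_conjugate_nonneg hρ J)
  have hcross : 0 ≤ f ((t • 1 + J) * ρ * star (t • 1 + J)) :=
    f.map_nonneg (star_right_conjugate_nonneg hρ _)
  rw [hexp] at hcross
  have hdiv : 0 ≤ t * f ρ + f (J * ρ + ρ * star J) + f (J * ρ * star J) / t :=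
    (div_nonneg hcross ht.le).trans_eq (by field_simp)
  rw [hexp, one_smul, add_sub_cancel_left]
  linear_combination hdiv + hJ

lemma star_sub_one_mul_sub_one_le {P Q : Matrix n n ℂ} (hP : IsStarProjection P)
    (hQ : IsStarProjection Q) :
    star (Q * P - 1) * (Q * P - 1) ≤ (1 - P) + (1 - Q) := by
  have hPP := hP.isIdempotentElem.eq
  have hQQ := hQ.isIdempotentElem.eq
  have hdiff : (1 - P) + (1 - Q) - star (Q * P - 1) * (Q * P - 1) =
      (1 - P) * (1 - Q) * (1 - P) := by
    simp only [star_sub, star_mul, star_one, hP.isSelfAdjoint.star_eq, hQ.isSelfAdjoint.star_eq]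
    have hPQP : P * Q * (Q * P) = P * Q * P := by
      rw [mul_assoc P Q, ← mul_assoc Q Q, hQQ, mul_assoc]
    simp only [sub_mul, mul_sub, one_mul, mul_one, hPQP, hPP]
    abel
  rw [← sub_nonneg, hdiff]
  exact hP.one_sub.isSelfAdjoint.conjugate_nonneg hQ.one_sub.nonneg

lemma le_map_projection_mul_projection (f : Matrix n n ℂ →ₚ[ℝ] ℝ) {c : ℝ} (hc : 0 ≤ c)
    (hf : ∀ X, 0 ≤ X → f X ≤ c * rtr X) {ρ P Q : Matrix n n ℂ} (hρ : 0 ≤ ρ)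
    (hP : IsStarProjection P) (hQ : IsStarProjection Q) {t : ℝ} (ht : 0 < t) :
    (1 - t) * f ρ - c * (rtr (ρ * (1 - P)) + rtr (ρ * (1 - Q))) / t ≤
      f (Q * P * ρ * star (Q * P)) := by
  refine le_trans ?_ (le_map_mul_mul_star f hρ (Q * P) ht)
  set J := Q * P - 1
  have hJ : f (J * ρ * star J) ≤ c * (rtr (ρ * (1 - P)) + rtr (ρ * (1 - Q))) := calc
    f (J * ρ * star J) ≤ c * rtr (J * ρ * star J) := hf _ (star_right_conjugate_nonneg hρ J)
    _ = c * rtr (ρ * (star J * J)) := by rw [mul_assoc, rtr_mul_comm, mul_assoc]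
    _ ≤ c * rtr (ρ * ((1 - P) + (1 - Q))) := by
      gcongr
      exact rtr_mul_le_mul_left hρ (star_sub_one_mul_sub_one_le hP hQ)
    _ = _ := by rw [mul_add, rtr_add]
  gcongr

end GentleMeasurement

section Kronecker

lemma kronecker_le_kronecker [Finite n] [Finite m] {A A' : Matrix n n ℂ} {B B' : Matrix m m ℂ}
    (hA : 0 ≤ A) (hB' : 0 ≤ B') (hAA' : A ≤ A') (hBB' : B ≤ B') : A ⊗ₖ B ≤ A' ⊗ₖ B' := by
  have hdiff : A' ⊗ₖ B' = A ⊗ₖ B + ((A' - A) ⊗ₖ B' + A ⊗ₖ (B' - B)) := by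
    rw [← add_sub_cancel A A', ← add_sub_cancel B B']
    simp only [add_kronecker, kronecker_add, add_sub_cancel_left]
    abel
  rw [hdiff]
  exact le_add_of_nonneg_right <| add_nonneg
    (PosSemidef.kronecker hAA' hB'.posSemidef).nonneg (hA.posSemidef.kronecker hBB').nonneg

variable [DecidableEq n] [DecidableEq m]

/-- The Kronecker sum `A ⊗ 1 + 1 ⊗ B`: the observable of a bipartite system that adds up an
observable of each part. -/
def kroneckerSum (A : Matrix n n ℂ) (B : Matrix m m ℂ) : Matrix (n × m) (n × m) ℂ :=
  A ⊗ₖ 1 + 1 ⊗ₖ B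

lemma kroneckerSum_add (A A' : Matrix n n ℂ) (B B' : Matrix m m ℂ) :
    kroneckerSum (A + A') (B + B') = kroneckerSum A B + kroneckerSum A' B' := by
  simp only [kroneckerSum, add_kronecker, kronecker_add]
  abel

lemma kroneckerSum_smul_one (c d : ℝ) :
    kroneckerSum (c • 1 : Matrix n n ℂ) (d • 1 : Matrix m m ℂ) = (c + d) • 1 := by
  simp only [kroneckerSum, smul_kronecker, kronecker_smul, one_kronecker_one, add_smul]

lemma kroneckerSum_nonneg [Finite n] [Finite m] {A : Matrix n n ℂ} {B : Matrix m m ℂ}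
    (hA : 0 ≤ A) (hB : 0 ≤ B) : 0 ≤ kroneckerSum A B :=
  add_nonneg (hA.posSemidef.kronecker PosSemidef.one).nonneg
    (PosSemidef.one.kronecker hB.posSemidef).nonneg

variable [Fintype n] [Fintype m]

lemma trace_kronecker_mul_kroneckerSum (R S : Matrix n n ℂ) (ρ A : Matrix m m ℂ) :
    ((R ⊗ₖ ρ) * kroneckerSum S A).trace =
      (R * S).trace * ρ.trace + R.trace * (ρ * A).trace := by
  simp only [kroneckerSum, mul_add, ← mul_kronecker_mul, mul_one, trace_add, trace_kronecker]

lemma trace_kronecker_mul_kroneckerSum_sq (R S : Matrix n n ℂ) (ρ A : Matrix m m ℂ) :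
    ((R ⊗ₖ ρ) * (kroneckerSum S A * kroneckerSum S A)).trace =
      (R * (S * S)).trace * ρ.trace + 2 * ((R * S).trace * (ρ * A).trace) +
        R.trace * (ρ * (A * A)).trace := by
  simp only [kroneckerSum, mul_add, add_mul, ← mul_kronecker_mul, mul_one, one_mul, trace_add,
    trace_kronecker]
  ring

/-- The product of two orthonormal bases. -/
def kroneckerUnitary (U : unitaryGroup n ℂ) (V : unitaryGroup m ℂ) : unitaryGroup (n × m) ℂ :=
  ⟨(U : Matrix n n ℂ) ⊗ₖ (V : Matrix m m ℂ), kronecker_mem_unitary U.2 V.2⟩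

lemma eigenHom_kronecker (U : unitaryGroup n ℂ) (V : unitaryGroup m ℂ) (a : n → ℝ) (b : m → ℝ) :
    eigenHom U a ⊗ₖ eigenHom V b = eigenHom (kroneckerUnitary U V) (fun i => a i.1 * b i.2) := by
  simp only [eigenHom_apply, mul_kronecker_mul, diagonal_kronecker_diagonal, star_eq_conjTranspose,
    conjTranspose_kronecker, Complex.ofReal_mul, kroneckerUnitary]

lemma kroneckerSum_eigenHom (U : unitaryGroup n ℂ) (V : unitaryGroup m ℂ) (a : n → ℝ)
    (b : m → ℝ) :
    kroneckerSum (eigenHom U a) (eigenHom V b) =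
      eigenHom (kroneckerUnitary U V) (fun i => a i.1 + b i.2) := by
  rw [kroneckerSum, ← map_one (eigenHom U), ← map_one (eigenHom V), eigenHom_kronecker,
    eigenHom_kronecker, ← map_add]
  simp only [Pi.one_apply, mul_one, one_mul]
  rfl

end Kronecker

section TensorPowers

variable [DecidableEq n]

/-- The total observable `∑ᵢ 1 ⊗ ⋯ ⊗ A ⊗ ⋯ ⊗ 1` of `k` copies of a system, with `A` acting on
the `i`-th copy. -/
def localSum (A : Matrix n n ℂ) : ∀ k, Matrix (tpow n k) (tpow n k) ℂ
  | 0 => 0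
  | k + 1 => kroneckerSum (localSum A k) A

lemma localSum_add (A B : Matrix n n ℂ) : ∀ k, localSum (A + B) k = localSum A k + localSum B k
  | 0 => (add_zero _).symm
  | k + 1 => by
    rw [localSum, localSum_add A B k]
    exact kroneckerSum_add ..

lemma localSum_smul_one (c : ℝ) : ∀ k : ℕ, localSum (c • 1 : Matrix n n ℂ) k = (k * c) • 1
  | 0 => by simp [localSum]
  | k + 1 => by
    rw [localSum, localSum_smul_one c k, Nat.cast_succ, add_one_mul]
    exact kroneckerSum_smul_one ..

section Finite

variable [Finite n]

instance finite_tpow : ∀ k, Finite (tpow n k)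
  | 0 => inferInstanceAs (Finite PUnit)
  | k + 1 =>
    have : Finite (tpow n k) := finite_tpow k
    inferInstanceAs (Finite (tpow n k × n))

lemma tpowMat_nonneg {A : Matrix n n ℂ} (hA : 0 ≤ A) : ∀ k, 0 ≤ tpowMat A k
  | 0 => PosSemidef.one.nonneg
  | k + 1 => ((tpowMat_nonneg hA k).posSemidef.kronecker hA.posSemidef).nonneg

lemma tpowMat_mono {A B : Matrix n n ℂ} (hA : 0 ≤ A) (h : A ≤ B) : ∀ k, tpowMat A k ≤ tpowMat B k
  | 0 => le_rfl
  | k + 1 => kronecker_le_kronecker (tpowMat_nonneg hA k) (hA.trans h) (tpowMat_mono hA h k) h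

lemma posDef_tpowMat {A : Matrix n n ℂ} (hA : A.PosDef) : ∀ k, (tpowMat A k).PosDef
  | 0 => PosDef.one
  | k + 1 => (posDef_tpowMat hA k).kronecker hA

lemma localSum_nonneg {A : Matrix n n ℂ} (hA : 0 ≤ A) : ∀ k, 0 ≤ localSum A k
  | 0 => le_rfl
  | k + 1 => kroneckerSum_nonneg (localSum_nonneg hA k) hA

lemma localSum_mono (k : ℕ) : Monotone fun A : Matrix n n ℂ => localSum A k := fun A B h => by
  have hsum := localSum_add A (B - A) k
  rw [add_sub_cancel] at hsum
  simpa only [hsum] using le_add_of_nonneg_right (localSum_nonneg (sub_nonneg.2 h) k)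

end Finite

variable [Fintype n]

lemma trace_tpowMat (A : Matrix n n ℂ) : ∀ k, (tpowMat A k).trace = A.trace ^ k
  | 0 => (trace_one (n := PUnit)).trans (by simp)
  | k + 1 => (trace_kronecker _ A).trans (by rw [trace_tpowMat A k, pow_succ])

lemma IsState.tpowMat {ρ : Matrix n n ℂ} (hρ : IsState ρ) (k : ℕ) : IsState (tpowMat ρ k) :=
  ⟨(tpowMat_nonneg hρ.nonneg k).posSemidef, by rw [trace_tpowMat, hρ.2, one_pow]⟩

lemma trace_tpowMat_mul_localSum {ρ : Matrix n n ℂ} (hρ : ρ.trace = 1) (A : Matrix n n ℂ) :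
    ∀ k : ℕ, (tpowMat ρ k * localSum A k).trace = k * (ρ * A).trace
  | 0 => by simp [localSum]
  | k + 1 => (trace_kronecker_mul_kroneckerSum ..).trans <| by
    rw [trace_tpowMat_mul_localSum hρ A k, trace_tpowMat, hρ]
    push_cast
    ring

lemma rtr_tpowMat_mul_localSum {ρ : Matrix n n ℂ} (hρ : ρ.trace = 1) (A : Matrix n n ℂ) (k : ℕ) :
    rtr (tpowMat ρ k * localSum A k) = k * rtr (ρ * A) := by
  rw [rtr, trace_tpowMat_mul_localSum hρ, ← nsmul_eq_mul, Complex.re_nsmul, nsmul_eq_mul, rtr]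

lemma rtr_tpowMat_mul_localSum_sq {ρ A : Matrix n n ℂ} (hρ : ρ.trace = 1)
    (hA : (ρ * A).trace = 0) (k : ℕ) :
    rtr (tpowMat ρ k * (localSum A k * localSum A k)) = k * rtr (ρ * (A * A)) := by
  have htrace : ∀ k : ℕ,
      (tpowMat ρ k * (localSum A k * localSum A k)).trace = k * (ρ * (A * A)).trace := fun k => by
    induction k with
    | zero => simp [localSum]
    | succ k ih =>
      refine (trace_kronecker_mul_kroneckerSum_sq ..).trans ?_
      rw [ih, trace_tpowMat, hρ, hA]
      push_cast
      ring
  rw [rtr, htrace, ← nsmul_eq_mul, Complex.re_nsmul, nsmul_eq_mul, rtr]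

/-- The eigenvalues `∏ᵢ a(jᵢ)` of a tensor power, indexed by multi-indices `j`. -/
def tpowProd {ι : Type} (a : ι → ℝ) : ∀ k, tpow ι k → ℝ
  | 0 => 1
  | k + 1 => fun j => tpowProd a k j.1 * a j.2

/-- The eigenvalues `∑ᵢ a(jᵢ)` of a local sum, indexed by multi-indices `j`. -/
def tpowSum {ι : Type} (a : ι → ℝ) : ∀ k, tpow ι k → ℝ
  | 0 => 0
  | k + 1 => fun j => tpowSum a k j.1 + a j.2

lemma tpowSum_neg {ι : Type} (a : ι → ℝ) : ∀ k j, tpowSum (-a) k j = -tpowSum a k j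
  | 0, _ => neg_zero.symm
  | k + 1, j => by simp only [tpowSum, tpowSum_neg a k, Pi.neg_apply, neg_add]

lemma tpowProd_eq_rpow_tpowSum {ι : Type} {a : ι → ℝ} (ha : ∀ i, 0 < a i) :
    ∀ k j, tpowProd a k j = 2 ^ tpowSum (Real.logb 2 ∘ a) k j
  | 0, _ => (Real.rpow_zero 2).symm
  | k + 1, j => by
    simp only [tpowProd, tpowSum, tpowProd_eq_rpow_tpowSum ha k, Function.comp_apply,
      Real.rpow_add two_pos, Real.rpow_logb two_pos (OfNat.ofNat_ne_one 2) (ha _)]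

lemma tpowProd_le_rpow_tpowSum {ι : Type} {a : ι → ℝ} (ha : 0 ≤ a) :
    ∀ k j, tpowProd a k j ≤ 2 ^ tpowSum (Real.logb 2 ∘ a) k j
  | 0, _ => (Real.rpow_zero 2).ge
  | k + 1, j => by
    have hle : a j.2 ≤ 2 ^ Real.logb 2 (a j.2) := by
      rcases (ha j.2).eq_or_lt' with h | h
      · simp [h]
      · rw [Real.rpow_logb two_pos (OfNat.ofNat_ne_one 2) h]
    simp only [tpowProd, tpowSum, Function.comp_apply, Real.rpow_add two_pos]
    exact mul_le_mul (tpowProd_le_rpow_tpowSum ha k _) hle (ha _) (Real.rpow_nonneg two_pos.le _)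

/-- The `k`-fold product of an orthonormal basis. -/
def tpowUnitary (U : unitaryGroup n ℂ) : ∀ k, unitaryGroup (tpow n k) ℂ
  | 0 => 1
  | k + 1 => kroneckerUnitary (tpowUnitary U k) U

lemma tpowMat_eigenHom (U : unitaryGroup n ℂ) (a : n → ℝ) :
    ∀ k, tpowMat (eigenHom U a) k = eigenHom (tpowUnitary U k) (tpowProd a k)
  | 0 => (map_one _).symm
  | k + 1 => by
    rw [tpowMat, tpowMat_eigenHom U a k]
    exact eigenHom_kronecker ..

lemma localSum_eigenHom (U : unitaryGroup n ℂ) (a : n → ℝ) :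
    ∀ k, localSum (eigenHom U a) k = eigenHom (tpowUnitary U k) (tpowSum a k)
  | 0 => (map_zero _).symm
  | k + 1 => by
    rw [localSum, localSum_eigenHom U a k]
    exact kroneckerSum_eigenHom ..

lemma mlog_tpowMat {A : Matrix n n ℂ} (hA : A.PosDef) (k : ℕ) :
    mlog (tpowMat A k) = localSum (mlog A) k := by
  obtain ⟨U, a, rfl⟩ := exists_eq_eigenHom hA.isHermitian
  have hlog : Real.logb 2 ∘ tpowProd a k = tpowSum (Real.logb 2 ∘ a) k := funext fun j => by
    rw [Function.comp_apply, tpowProd_eq_rpow_tpowSum (posDef_eigenHom.1 hA),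
      Real.logb_rpow two_pos (OfNat.ofNat_ne_one 2)]
  rw [tpowMat_eigenHom, mlog_eigenHom, mlog_eigenHom, localSum_eigenHom, hlog]

end TensorPowers

section Channels

/-- Complete positivity: `id_k ⊗ Φ` preserves positivity for every finite ancilla `k`. Unlike in
`IsQChannel`, the ancilla is an arbitrary finite type, so that composite systems are covered. -/
def IsCP (Φ : Matrix n n ℂ →ₗ[ℂ] Matrix m m ℂ) : Prop :=
  ∀ (k : Type) [Fintype k] (M : Matrix (k × n) (k × n) ℂ), M.PosSemidef →
    (blockApply Φ M).PosSemidef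

lemma IsCP.map_nonneg {Φ : Matrix n n ℂ →ₗ[ℂ] Matrix m m ℂ} (h : IsCP Φ) {M : Matrix n n ℂ}
    (hM : 0 ≤ M) : 0 ≤ Φ M :=
  ((h Unit _ (hM.posSemidef.submatrix Prod.snd)).submatrix fun i => ((), i)).nonneg

lemma IsCP.mono {Φ : Matrix n n ℂ →ₗ[ℂ] Matrix m m ℂ} (h : IsCP Φ) : Monotone Φ :=
  fun M N hMN => by
    rw [← sub_nonneg, ← map_sub]
    exact h.map_nonneg (sub_nonneg.2 hMN)

section Tensor

variable {n₁ m₁ n₂ m₂ : Type} {E₁ : Matrix n₁ n₁ ℂ →ₗ[ℂ] Matrix m₁ m₁ ℂ}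
  {E₂ : Matrix n₂ n₂ ℂ →ₗ[ℂ] Matrix m₂ m₂ ℂ}

lemma IsCP.tensorChannel [Finite n₁] [Finite m₂] (h₁ : IsCP E₁) (h₂ : IsCP E₂) :
    IsCP (tensorChannel E₁ E₂) := by
  have := Fintype.ofFinite n₁
  have := Fintype.ofFinite m₂
  intro k _ M hM
  have hM₂ := h₂ (k × n₁) _ (hM.submatrix fun p => (p.1.1, (p.1.2, p.2)))
  have hM₁ := h₁ (k × m₂) _ (hM₂.submatrix fun p => ((p.1.1, p.2), p.1.2))
  exact hM₁.submatrix fun p : k × (m₁ × m₂) => ((p.1, p.2.2), p.2.1)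

lemma tensorChannel_kronecker (A : Matrix n₁ n₁ ℂ) (B : Matrix n₂ n₂ ℂ) :
    tensorChannel E₁ E₂ (A ⊗ₖ B) = E₁ A ⊗ₖ E₂ B := by
  ext p q
  have hB (a b : n₁) : E₂ (of fun c d => A a b * B c d) p.2 q.2 = A a b * E₂ B p.2 q.2 :=
    congrFun₂ (map_smul E₂ (A a b) B) p.2 q.2
  have hA : (of fun a b => A a b * E₂ B p.2 q.2) = E₂ B p.2 q.2 • A := by
    ext a b
    exact mul_comm _ _
  calc tensorChannel E₁ E₂ (A ⊗ₖ B) p q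
    _ = E₁ (of fun a b => E₂ (of fun c d => A a b * B c d) p.2 q.2) p.1 q.1 := rfl
    _ = E₂ B p.2 q.2 * E₁ A p.1 q.1 := by
      simp only [hB, hA, map_smul]
      rfl
    _ = (E₁ A ⊗ₖ E₂ B) p q := mul_comm _ _

variable [Fintype n₁] [Fintype m₁] [Fintype n₂] [Fintype m₂]

lemma trace_tensorChannel (h₁ : ∀ M, (E₁ M).trace = M.trace) (h₂ : ∀ M, (E₂ M).trace = M.trace)
    (M : Matrix (n₁ × n₂) (n₁ × n₂) ℂ) : (tensorChannel E₁ E₂ M).trace = M.trace := calc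
  (tensorChannel E₁ E₂ M).trace
    = ∑ j, (E₁ (of fun a b => E₂ (of fun c d => M (a, c) (b, d)) j j)).trace :=
      Fintype.sum_prod_type_right _
  _ = ∑ j, ∑ a, E₂ (of fun c d => M (a, c) (a, d)) j j := by
      simp only [h₁]
      rfl
  _ = ∑ a, (E₂ (of fun c d => M (a, c) (a, d))).trace := by
      rw [Finset.sum_comm]
      rfl
  _ = M.trace := by
      simp only [h₂]
      exact (Fintype.sum_prod_type fun p : n₁ × n₂ => M p p).symm

end Tensor

lemma tpowChannel_tpowMat [DecidableEq n] [DecidableEq m] (E : Matrix n n ℂ →ₗ[ℂ] Matrix m m ℂ)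
    (ρ : Matrix n n ℂ) : ∀ k, tpowChannel E k (tpowMat ρ k) = tpowMat (E ρ) k
  | 0 => rfl
  | k + 1 => (tensorChannel_kronecker ..).trans
      (congrArg (· ⊗ₖ E ρ) (tpowChannel_tpowMat E ρ k))

lemma IsCP.tpowChannel [Finite n] [Finite m] {E : Matrix n n ℂ →ₗ[ℂ] Matrix m m ℂ}
    (hE : IsCP E) : ∀ k, IsCP (tpowChannel E k)
  | 0 => fun _ _ _ hM => hM
  | k + 1 => (hE.tpowChannel k).tensorChannel hE

variable [Fintype n] [Fintype m]

lemma IsQChannel.isCP {Φ : Matrix n n ℂ →ₗ[ℂ] Matrix m m ℂ} (h : IsQChannel Φ) : IsCP Φ := by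
  intro k _ M hM
  rcases isEmpty_or_nonempty k with hk | hk
  · rw [Subsingleton.elim (blockApply Φ M) 0]
    exact PosSemidef.zero
  · let e := Fintype.equivFin k
    have hcard := (h.2 _ Fintype.card_pos _
      (hM.submatrix (e.symm.prodCongr (Equiv.refl n)))).submatrix (e.prodCongr (Equiv.refl m))
    convert hcard using 1
    ext p q
    simp [blockApply, e]

lemma IsQChannel.rtr_map {Φ : Matrix n n ℂ →ₗ[ℂ] Matrix m m ℂ} (h : IsQChannel Φ)
    (M : Matrix n n ℂ) : rtr (Φ M) = rtr M := congrArg Complex.re (h.1 M)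

lemma IsQChannel.isState {Φ : Matrix n n ℂ →ₗ[ℂ] Matrix m m ℂ} (h : IsQChannel Φ)
    {ρ : Matrix n n ℂ} (hρ : IsState ρ) : IsState (Φ ρ) :=
  ⟨(h.isCP.map_nonneg hρ.nonneg).posSemidef, (h.1 ρ).trans hρ.2⟩

lemma IsQChannel.tpowChannel {E : Matrix n n ℂ →ₗ[ℂ] Matrix m m ℂ} (hE : IsQChannel E) (k : ℕ) :
    IsQChannel (tpowChannel E k) := by
  have htrace : ∀ k M, (QCD.tpowChannel E k M).trace = M.trace := fun k => by
    induction k with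
    | zero => exact fun _ => rfl
    | succ k ih => exact trace_tensorChannel ih hE.1
  exact ⟨htrace k, fun l _ => hE.isCP.tpowChannel k (Fin l)⟩

end Channels

section ChannelDivergence

variable [Fintype n] [Fintype m] [DecidableEq n] [DecidableEq m]

lemma mlog_submatrix (e : m ≃ n) {A : Matrix n n ℂ} (hA : A.IsHermitian) :
    mlog (A.submatrix e e) = (mlog A).submatrix e e := by
  obtain ⟨U, a, rfl⟩ := exists_eq_eigenHom hA
  let φ : Matrix n n ℂ →⋆ₐ[ℝ] Matrix m m ℂ :=
    { (reindexAlgEquiv ℝ ℂ e.symm : Matrix n n ℂ →ₐ[ℝ] Matrix m m ℂ) with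
      map_star' := fun M => (conjTranspose_submatrix M e e).symm }
  exact (matFun_map_starAlgHom _ (φ.comp (eigenHom U)) a).trans
    (congrArg φ (mlog_eigenHom U a)).symm

omit [DecidableEq n] [DecidableEq m] in
lemma SuppLE.submatrix {A B : Matrix n n ℂ} (h : SuppLE A B) (e : m ≃ n) :
    SuppLE (A.submatrix e e) (B.submatrix e e) := fun v hv => by
  rw [submatrix_mulVec_equiv] at hv ⊢
  rw [h _ ((e.surjective.injective_comp_right (γ := ℂ)) hv), Pi.zero_comp]

lemma relEntropy_submatrix (e : m ≃ n) {A B : Matrix n n ℂ} (hA : A.IsHermitian)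
    (hB : B.IsHermitian) :
    relEntropy (A.submatrix e e) (B.submatrix e e) = relEntropy A B := by
  have hsupp : SuppLE (A.submatrix e e) (B.submatrix e e) ↔ SuppLE A B :=
    ⟨fun h => by simpa using h.submatrix e.symm, fun h => h.submatrix e⟩
  have hrtr : rtr (A.submatrix e e * ((mlog A).submatrix e e - (mlog B).submatrix e e)) =
      rtr (A * (mlog A - mlog B)) := by
    rw [← Pi.sub_apply, ← Pi.sub_apply, ← Matrix.submatrix_sub, submatrix_mul_equiv, rtr, rtr]
    exact congrArg Complex.re (e.sum_comp fun i => (A * (mlog A - mlog B)) i i)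
  by_cases h : SuppLE A B
  · rw [relEntropy, relEntropy, if_pos h, if_pos (hsupp.2 h), mlog_submatrix e hA,
      mlog_submatrix e hB, hrtr]
  · rw [relEntropy, relEntropy, if_neg h, if_neg (mt hsupp.1 h)]

lemma relEntropy_ne_bot (ρ σ : Matrix n n ℂ) : relEntropy ρ σ ≠ ⊥ := by
  unfold relEntropy
  split_ifs
  exacts [EReal.coe_ne_bot _, top_ne_bot]

omit [DecidableEq n] in
lemma relEntropy_le_chDiv {E F : Matrix n n ℂ →ₗ[ℂ] Matrix m m ℂ} (hE : IsCP E) (hF : IsCP F)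
    {ν : Matrix n n ℂ} (hν : IsState ν) : relEntropy (E ν) (F ν) ≤ chDiv relD E F := by
  let e := Equiv.uniqueProd n (Fin 1)
  have hν' : IsState (ν.submatrix e e) := by
    refine ⟨hν.1.submatrix e, ?_⟩
    rw [← hν.2]
    exact e.sum_comp fun i => ν i i
  rw [← relEntropy_submatrix (Equiv.uniqueProd m (Fin 1))
    (hE.map_nonneg hν.nonneg).posSemidef.isHermitian
    (hF.map_nonneg hν.nonneg).posSemidef.isHermitian]
  exact le_iSup₂_of_le 1 le_rfl (le_iSup₂_of_le (ν.submatrix e e) hν' le_rfl)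

omit [DecidableEq n] in
lemma inv_mul_relEntropy_tpowChannel_le {E F : Matrix n n ℂ →ₗ[ℂ] Matrix m m ℂ} (hE : IsCP E)
    (hF : IsCP F) {k : ℕ} (hk : 1 ≤ k) {ν : Matrix (tpow n k) (tpow n k) ℂ} (hν : IsState ν) :
    (((k : ℝ)⁻¹ : ℝ) : EReal) * relEntropy (tpowChannel E k ν) (tpowChannel F k ν) ≤
      regRelEntropy E F :=
  le_iSup₂_of_le k hk <| mul_le_mul_of_nonneg_left
    (relEntropy_le_chDiv (hE.tpowChannel k) (hF.tpowChannel k) hν)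
    (EReal.coe_nonneg.2 (inv_nonneg.2 k.cast_nonneg))

omit [DecidableEq n] in
lemma relEntropy_tpowChannel_le {E F : Matrix n n ℂ →ₗ[ℂ] Matrix m m ℂ} (hE : IsCP E)
    (hF : IsCP F) {R : ℝ} (hR : regRelEntropy E F ≤ R) {k : ℕ} (hk : 1 ≤ k)
    {ν : Matrix (tpow n k) (tpow n k) ℂ} (hν : IsState ν) :
    relEntropy (tpowChannel E k ν) (tpowChannel F k ν) ≤ (k * R : ℝ) := by
  have hk' : (0 : ℝ) < k := Nat.cast_pos.2 hk
  have hle := mul_le_mul_of_nonneg_left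
    ((inv_mul_relEntropy_tpowChannel_le hE hF hk hν).trans hR) (EReal.coe_nonneg.2 hk'.le)
  rwa [← mul_assoc, ← EReal.coe_mul, mul_inv_cancel₀ hk'.ne', EReal.coe_one, one_mul,
    ← EReal.coe_mul] at hle

omit [DecidableEq n] in
lemma regRelEntropy_ne_bot {E F : Matrix n n ℂ →ₗ[ℂ] Matrix m m ℂ} (hE : IsCP E) (hF : IsCP F)
    {ρ : Matrix n n ℂ} (hρ : IsState ρ) : regRelEntropy E F ≠ ⊥ := fun h => by
  classical
  have hle := inv_mul_relEntropy_tpowChannel_le hE hF le_rfl (hρ.tpowMat 1)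
  rw [h, le_bot_iff, Nat.cast_one, inv_one, EReal.coe_one, one_mul] at hle
  exact relEntropy_ne_bot _ _ hle

end ChannelDivergence

section Typicality

variable [Fintype n] [DecidableEq n]

/-- The orthogonal projection onto the span of the columns of `U` indexed by `s`; for `s` a
sublevel set of `a` it is a spectral projection of `eigenHom U a`. -/
def spectralProjection (U : unitaryGroup n ℂ) (s : Set n) : Matrix n n ℂ :=
  eigenHom U (s.indicator 1)

lemma isStarProjection_spectralProjection (U : unitaryGroup n ℂ) (s : Set n) :
    IsStarProjection (spectralProjection U s) where
  isIdempotentElem := by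
    rw [IsIdempotentElem, spectralProjection, ← map_mul]
    congr 1 with i
    by_cases hi : i ∈ s <;> simp [hi]
  isSelfAdjoint := isHermitian_eigenHom U _

lemma rtr_mul_one_sub_spectralProjection_le {ω : Matrix n n ℂ} (hω : 0 ≤ ω)
    (U : unitaryGroup n ℂ) (a : n → ℝ) (μ : ℝ) {ε : ℝ} (hε : 0 < ε) :
    rtr (ω * (1 - spectralProjection U {i | a i ≤ μ + ε})) ≤
      rtr (ω * ((eigenHom U a - μ • 1) * (eigenHom U a - μ • 1))) / ε ^ 2 := by
  have hsub : 1 - spectralProjection U {i | a i ≤ μ + ε} ≤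
      (ε ^ 2)⁻¹ • ((eigenHom U a - μ • 1) * (eigenHom U a - μ • 1)) := by
    rw [spectralProjection, ← map_one (eigenHom U), ← map_sub, ← map_smul, ← map_sub, ← map_mul,
      ← map_smul]
    refine eigenHom_mono U fun i => ?_
    simp only [Pi.sub_apply, Pi.one_apply, Pi.smul_apply, Pi.mul_apply, smul_eq_mul, mul_one]
    by_cases hi : a i ≤ μ + ε
    · rw [Set.indicator_of_mem (by exact hi), Pi.one_apply, sub_self]
      exact mul_nonneg (by positivity) (mul_self_nonneg _)
    · rw [Set.indicator_of_notMem (by exact hi), sub_zero, ← div_eq_inv_mul,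
        one_le_div (by positivity)]
      nlinarith
  refine (rtr_mul_le_mul_left hω hsub).trans_eq ?_
  rw [mul_smul_comm, rtr_smul, div_eq_inv_mul]

-- The weak law of large numbers: `localSum` has mean `k μ` and variance `O(k)` in `ρ^⊗k`.
lemma tendsto_rtr_tpowMat_mul_one_sub_spectralProjection {ρ : Matrix n n ℂ} (hρ : IsState ρ)
    (U : unitaryGroup n ℂ) (x : n → ℝ) {δ : ℝ} (hδ : 0 < δ) :
    Tendsto (fun k : ℕ => rtr (tpowMat ρ k * (1 - spectralProjection (tpowUnitary U k)
      {j | tpowSum x k j ≤ k * (rtr (ρ * eigenHom U x) + δ)}))) atTop (𝓝 0) := by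
  set μ := rtr (ρ * eigenHom U x)
  set H := eigenHom U x - μ • 1
  have hH : H.IsHermitian :=
    (isHermitian_eigenHom U x).sub (isHermitian_one.smul (IsSelfAdjoint.all μ))
  have hmean : (ρ * H).trace = 0 := by
    rw [← ofReal_rtr_mul hρ.1.isHermitian hH, mul_sub, rtr_sub, mul_smul_one, rtr_smul,
      hρ.rtr_eq_one, mul_one, sub_self, Complex.ofReal_zero]
  have hlocal (k : ℕ) :
      localSum H k = eigenHom (tpowUnitary U k) (tpowSum x k) - (k * μ) • 1 := by
    have hadd := localSum_add H (μ • 1) k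
    rw [sub_add_cancel, localSum_eigenHom, localSum_smul_one] at hadd
    exact eq_sub_of_add_eq hadd.symm
  have hbound (k : ℕ) (hk : 0 < k) : rtr (tpowMat ρ k * (1 - spectralProjection (tpowUnitary U k)
      {j | tpowSum x k j ≤ k * (μ + δ)})) ≤ rtr (ρ * (H * H)) / δ ^ 2 / k := by
    have hk' : (0 : ℝ) < k := Nat.cast_pos.2 hk
    have hcheb := rtr_mul_one_sub_spectralProjection_le (tpowMat_nonneg hρ.nonneg k)
      (tpowUnitary U k) (tpowSum x k) (k * μ) (mul_pos hk' hδ)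
    rw [← mul_add, ← hlocal, rtr_tpowMat_mul_localSum_sq hρ.2 hmean] at hcheb
    refine hcheb.trans_eq ?_
    field_simp
  refine tendsto_of_tendsto_of_tendsto_of_le_of_le' tendsto_const_nhds
    (tendsto_const_div_atTop_nhds_zero_nat _) (Eventually.of_forall fun k => ?_)
    ((eventually_gt_atTop 0).mono hbound)
  exact rtr_mul_nonneg (tpowMat_nonneg hρ.nonneg k)
    (isStarProjection_spectralProjection _ _).one_sub.nonneg

lemma spectralProjection_mul_tpowMat_mul_le (U : unitaryGroup n ℂ) {a : n → ℝ} (ha : 0 ≤ a)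
    (k : ℕ) (τ : ℝ) :
    spectralProjection (tpowUnitary U k) {j | tpowSum (Real.logb 2 ∘ a) k j ≤ τ} *
        tpowMat (eigenHom U a) k *
        spectralProjection (tpowUnitary U k) {j | tpowSum (Real.logb 2 ∘ a) k j ≤ τ} ≤
      (2 : ℝ) ^ τ • 1 := by
  rw [spectralProjection, tpowMat_eigenHom, ← map_one (eigenHom (tpowUnitary U k)), ← map_mul,
    ← map_mul, ← map_smul]
  refine eigenHom_mono _ fun j => ?_
  by_cases hj : tpowSum (Real.logb 2 ∘ a) k j ≤ τ
  · have hle := (tpowProd_le_rpow_tpowSum ha k j).trans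
      (Real.rpow_le_rpow_of_exponent_le one_le_two hj)
    simpa [hj] using hle
  · simpa [hj] using Real.rpow_nonneg two_pos.le τ

lemma spectralProjection_le_smul_tpowMat (U : unitaryGroup n ℂ) {s : n → ℝ} (hs : ∀ i, 0 < s i)
    (k : ℕ) (τ : ℝ) :
    spectralProjection (tpowUnitary U k) {j | tpowSum (-(Real.logb 2 ∘ s)) k j ≤ τ} ≤
      (2 : ℝ) ^ τ • tpowMat (eigenHom U s) k := by
  rw [spectralProjection, tpowMat_eigenHom, ← map_smul]
  refine eigenHom_mono _ fun j => ?_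
  have hprod : (2 : ℝ) ^ τ * tpowProd s k j = 2 ^ (τ - tpowSum (-(Real.logb 2 ∘ s)) k j) := by
    rw [tpowProd_eq_rpow_tpowSum hs, tpowSum_neg, sub_neg_eq_add, Real.rpow_add two_pos]
  rw [Pi.smul_apply, smul_eq_mul, hprod]
  by_cases hj : tpowSum (-(Real.logb 2 ∘ s)) k j ≤ τ
  · simpa [hj] using Real.one_le_rpow one_le_two (sub_nonneg.2 hj)
  · simpa [hj] using Real.rpow_nonneg two_pos.le _

omit [DecidableEq n] in
lemma rtr_projection_mul_mul_projection_le {P Y : Matrix n n ℂ} (hP : IsStarProjection P)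
    (hY : 0 ≤ Y) : rtr (P * Y * P) ≤ rtr Y := by
  classical
  rw [rtr_mul_comm, ← mul_assoc, hP.isIdempotentElem.eq, rtr_mul_comm]
  simpa using rtr_mul_le_mul_left hY hP.le_one

lemma projection_mul_mul_projection_le_smul {Q Y σ : Matrix n n ℂ} (hQ : IsStarProjection Q)
    {a b : ℝ} (ha : 0 ≤ a) (hY : Y ≤ a • 1) (hQσ : Q ≤ b • σ) : Q * Y * Q ≤ (a * b) • σ := calc
  Q * Y * Q ≤ Q * (a • 1) * Q := hQ.isSelfAdjoint.conjugate_le_conjugate hY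
  _ = a • Q := by rw [mul_smul_one, smul_mul_assoc, hQ.isIdempotentElem.eq]
  _ ≤ (a * b) • σ := by
    rw [mul_smul]
    exact smul_le_smul_of_nonneg_left hQσ ha

omit [DecidableEq n] in
lemma isState_inv_rtr_smul {X : Matrix n n ℂ} (hX : 0 ≤ X) (hrtr : 0 < rtr X) :
    IsState ((rtr X)⁻¹ • X) := by
  refine ⟨(smul_nonneg (inv_nonneg.2 hrtr.le) hX).posSemidef, ?_⟩
  rw [trace_smul, ← ofReal_rtr hX.posSemidef.isHermitian, Complex.real_smul, ← Complex.ofReal_mul,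
    inv_mul_cancel₀ hrtr.ne', Complex.ofReal_one]

lemma exists_isState_le_smul_of_projection {ρ σ P Q : Matrix n n ℂ} (hρ : IsState ρ)
    (hP : IsStarProjection P) (hQ : IsStarProjection Q) {a b : ℝ} (ha : 0 ≤ a)
    (hPρ : P * ρ * P ≤ a • 1) (hQσ : Q ≤ b • σ) {δ : ℝ} (hδ : 0 < δ) (hδ' : δ ≤ 1 / 4)
    (hPQ : rtr (ρ * (1 - P)) + rtr (ρ * (1 - Q)) ≤ δ ^ 2) :
    ∃ ν, IsState ν ∧ ν ≤ (2 * (a * b)) • σ ∧ ∀ (f : Matrix n n ℂ →ₚ[ℝ] ℝ) (c : ℝ), 0 ≤ c →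
      (∀ X, 0 ≤ X → f X ≤ c * rtr X) → (1 - δ) * f ρ - c * δ ≤ f ν := by
  set X := Q * P * ρ * star (Q * P) with hX
  have hX0 : 0 ≤ X := star_right_conjugate_nonneg hρ.nonneg _
  have hX' : X = Q * (P * ρ * P) * Q := by
    simp only [hX, star_mul, hP.isSelfAdjoint.star_eq, hQ.isSelfAdjoint.star_eq, mul_assoc]
  have hgentle (f : Matrix n n ℂ →ₚ[ℝ] ℝ) (c : ℝ) (hc : 0 ≤ c)
      (hf : ∀ X, 0 ≤ X → f X ≤ c * rtr X) : (1 - δ) * f ρ - c * δ ≤ f X := by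
    refine le_trans ?_ (le_map_projection_mul_projection f hc hf hρ.nonneg hP hQ hδ)
    rw [mul_div_assoc]
    gcongr
    rwa [div_le_iff₀ hδ, ← sq]
  have hXσ : X ≤ (a * b) • σ := hX' ▸ projection_mul_mul_projection_le_smul hQ ha hPρ hQσ
  have hle_one : rtr X ≤ 1 := by
    rw [hX', ← hρ.rtr_eq_one]
    exact (rtr_projection_mul_mul_projection_le hQ
      (hP.isSelfAdjoint.conjugate_nonneg hρ.nonneg)).trans
      (rtr_projection_mul_mul_projection_le hP hρ.nonneg)
  have hhalf_le : 1 / 2 ≤ rtr X := by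
    have hrtr : (1 - δ) * rtr ρ - 1 * δ ≤ rtr X :=
      hgentle (PositiveLinearMap.mk₀ rtrLM fun _ => rtr_nonneg) 1 zero_le_one
        fun X _ => (one_mul (rtr X)).ge
    rw [hρ.rtr_eq_one] at hrtr
    linarith
  have hpos : 0 < rtr X := one_half_pos.trans_le hhalf_le
  refine ⟨(rtr X)⁻¹ • X, isState_inv_rtr_smul hX0 hpos, ?_, fun f c hc hf => ?_⟩
  · calc (rtr X)⁻¹ • X ≤ (2 : ℝ) • X :=
        smul_le_smul_of_nonneg_right (inv_le_of_inv_le₀ two_pos (by rwa [← one_div])) hX0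
      _ ≤ (2 : ℝ) • ((a * b) • σ) := smul_le_smul_of_nonneg_left hXσ zero_le_two
      _ = _ := (mul_smul _ _ _).symm
  · rw [map_smul, smul_eq_mul]
    exact (hgentle f c hc hf).trans
      (le_mul_of_one_le_left (f.map_nonneg hX0) ((one_le_inv₀ hpos).2 hle_one))

lemma eventually_exists_isState_le_smul_tpowMat {ρ σ : Matrix n n ℂ} (hρ : IsState ρ)
    (hσ : σ.PosDef) {δ : ℝ} (hδ : 0 < δ) (hδ' : δ ≤ 1 / 4) :
    ∀ᶠ k : ℕ in atTop, ∃ ν, IsState ν ∧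
      ν ≤ (2 : ℝ) ^ (k * (rtr (ρ * (mlog ρ - mlog σ)) + 3 * δ)) • tpowMat σ k ∧
      ∀ (f : Matrix (tpow n k) (tpow n k) ℂ →ₚ[ℝ] ℝ) (c : ℝ), 0 ≤ c →
        (∀ X, 0 ≤ X → f X ≤ c * rtr X) → (1 - δ) * f (tpowMat ρ k) - c * δ ≤ f ν := by
  obtain ⟨U, a, hρa⟩ := exists_eq_eigenHom hρ.1.isHermitian
  obtain ⟨V, s, hσs⟩ := exists_eq_eigenHom hσ.isHermitian
  have ha : 0 ≤ a := posSemidef_eigenHom.1 (hρa ▸ hρ.1)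
  have hs : ∀ i, 0 < s i := posDef_eigenHom.1 (hσs ▸ hσ)
  set x := Real.logb 2 ∘ a
  set y := -(Real.logb 2 ∘ s)
  have hD : rtr (ρ * (mlog ρ - mlog σ)) = rtr (ρ * eigenHom U x) + rtr (ρ * eigenHom V y) := by
    rw [map_neg, ← mlog_eigenHom, ← mlog_eigenHom, ← hρa, ← hσs, ← rtr_add, ← mul_add,
      sub_eq_add_neg]
  have hlim := (tendsto_rtr_tpowMat_mul_one_sub_spectralProjection hρ U x hδ).add
    (tendsto_rtr_tpowMat_mul_one_sub_spectralProjection hρ V y hδ)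
  rw [add_zero] at hlim
  have hlarge : ∀ᶠ k : ℕ in atTop, 1 ≤ k * δ :=
    (tendsto_natCast_atTop_atTop.atTop_mul_const hδ).eventually_ge_atTop 1
  filter_upwards [hlim.eventually_le_const (pow_pos hδ 2), hlarge] with k hk hkδ
  obtain ⟨ν, hν, hνσ, hf⟩ := exists_isState_le_smul_of_projection (hρ.tpowMat k)
    (isStarProjection_spectralProjection _ _) (isStarProjection_spectralProjection _ _)
    (Real.rpow_nonneg two_pos.le _)
    (hρa ▸ spectralProjection_mul_tpowMat_mul_le U ha k _)
    (hσs ▸ spectralProjection_le_smul_tpowMat V hs k _) hδ hδ' hk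
  have hrate : 2 * ((2 : ℝ) ^ (k * (rtr (ρ * eigenHom U x) + δ)) *
      2 ^ (k * (rtr (ρ * eigenHom V y) + δ))) ≤
      2 ^ (k * (rtr (ρ * (mlog ρ - mlog σ)) + 3 * δ)) := by
    nth_rw 1 [← Real.rpow_one 2]
    rw [← Real.rpow_add two_pos, ← Real.rpow_add two_pos, hD]
    exact Real.rpow_le_rpow_of_exponent_le one_le_two (by linarith)
  exact ⟨ν, hν, hνσ.trans (smul_le_smul_of_nonneg_right hrate
    (tpowMat_nonneg hσ.posSemidef.nonneg k)), hf⟩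

end Typicality

section ChainRule

variable [Fintype n] [Fintype m] [DecidableEq n] [DecidableEq m]

lemma suppLE_of_relEntropy_le {ω A : Matrix n n ℂ} {r : ℝ} (h : relEntropy ω A ≤ r) :
    SuppLE ω A := by
  by_contra hsupp
  rw [relEntropy, if_neg hsupp, top_le_iff] at h
  exact EReal.coe_ne_top r h

lemma rtr_mul_mlog_sub_mlog_le {ω A B θ : Matrix n n ℂ} (hω : IsState ω) (hA : 0 ≤ A)
    (hB : B.PosDef) (hAB : A ≤ B) (hθ : θ.PosDef) {r : ℝ} (hr : relEntropy ω A ≤ r) :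
    rtr (ω * (mlog θ - mlog B)) ≤ r + Real.logb 2 (rtr θ) := by
  have hsupp := suppLE_of_relEntropy_le hr
  rw [relEntropy, if_pos hsupp, EReal.coe_le_coe_iff, mul_sub, rtr_sub] at hr
  rw [mul_sub, rtr_sub]
  linarith [gibbs_variational hω hθ, rtr_mul_mlog_le_of_le hω.nonneg hA hB hsupp hAB]

lemma rtr_tpowMat {A : Matrix n n ℂ} (hA : A.IsHermitian) (k : ℕ) :
    rtr (tpowMat A k) = rtr A ^ k := by
  rw [rtr, trace_tpowMat, ← ofReal_rtr hA, ← Complex.ofReal_pow, Complex.ofReal_re]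

lemma rtr_mul_localSum_mlog_sub_mlog_le {k : ℕ} {ω A : Matrix (tpow n k) (tpow n k) ℂ}
    {T θ : Matrix n n ℂ} (hω : IsState ω) (hA : 0 ≤ A) (hT : T.PosDef) (hθ : θ.PosDef) {c r : ℝ}
    (hc : 0 < c) (hAT : A ≤ c • tpowMat T k) (hr : relEntropy ω A ≤ r) :
    rtr (ω * localSum (mlog θ - mlog T) k) ≤ r + Real.logb 2 c + k * Real.logb 2 (rtr θ) := by
  have hTk := posDef_tpowMat hT k
  have hle := rtr_mul_mlog_sub_mlog_le hω hA (hTk.smul hc) hAT (posDef_tpowMat hθ k) hr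
  have hsum := localSum_add (mlog T) (mlog θ - mlog T) k
  rw [add_sub_cancel] at hsum
  rw [mlog_smul hTk hc, mlog_tpowMat hθ, mlog_tpowMat hT, hsum, rtr_tpowMat hθ.isHermitian,
    Real.logb_pow, add_comm (_ • 1), add_sub_add_left_eq_sub, mul_sub, mul_smul_one, rtr_sub,
    rtr_smul, hω.rtr_eq_one] at hle
  linarith

lemma rtr_mul_localSum_add_smul_one {k : ℕ} (X : Matrix (tpow n k) (tpow n k) ℂ)
    (H : Matrix n n ℂ) (h : ℝ) :
    rtr (X * localSum (H + h • 1) k) = rtr (X * localSum H k) + k * h * rtr X := by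
  rw [localSum_add, localSum_smul_one, mul_add, mul_smul_one, rtr_add, rtr_smul]

/-- The expectation of the total observable `localSum H k` in the output of `k` uses of the
channel `E`, as a positive functional of the joint input. -/
def outputExpectation {E : Matrix n n ℂ →ₗ[ℂ] Matrix m m ℂ} (hE : IsCP E) {H : Matrix m m ℂ}
    (hH : 0 ≤ H) (k : ℕ) : Matrix (tpow n k) (tpow n k) ℂ →ₚ[ℝ] ℝ :=
  .mk₀ (rtrLM ∘ₗ LinearMap.mulRight ℝ (localSum H k) ∘ₗ (tpowChannel E k).restrictScalars ℝ)
    fun _ hX => rtr_mul_nonneg ((hE.tpowChannel k).map_nonneg hX) (localSum_nonneg hH k)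

omit [DecidableEq n] in
lemma outputExpectation_apply {E : Matrix n n ℂ →ₗ[ℂ] Matrix m m ℂ} (hE : IsCP E)
    {H : Matrix m m ℂ} (hH : 0 ≤ H) (k : ℕ) (X : Matrix (tpow n k) (tpow n k) ℂ) :
    outputExpectation hE hH k X = rtr (tpowChannel E k X * localSum H k) := rfl

lemma outputExpectation_tpowMat {E : Matrix n n ℂ →ₗ[ℂ] Matrix m m ℂ} (hE : IsQChannel E)
    {H : Matrix m m ℂ} (hH : 0 ≤ H) {ρ : Matrix n n ℂ} (hρ : IsState ρ) (k : ℕ) :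
    outputExpectation hE.isCP hH k (tpowMat ρ k) = k * rtr (E ρ * H) := by
  rw [outputExpectation_apply, tpowChannel_tpowMat, rtr_tpowMat_mul_localSum (hE.isState hρ).2]

omit [DecidableEq n] in
lemma outputExpectation_le {E : Matrix n n ℂ →ₗ[ℂ] Matrix m m ℂ} (hE : IsQChannel E)
    {H : Matrix m m ℂ} (hH : 0 ≤ H) {C : ℝ} (hC : H ≤ C • 1) (k : ℕ)
    {X : Matrix (tpow n k) (tpow n k) ℂ} (hX : 0 ≤ X) :
    outputExpectation hE.isCP hH k X ≤ k * C * rtr X := by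
  have hle := rtr_mul_le_mul_left ((hE.isCP.tpowChannel k).map_nonneg hX) (localSum_mono k hC)
  simp only [localSum_smul_one, mul_smul_one, rtr_smul] at hle
  rwa [(hE.tpowChannel k).rtr_map] at hle

-- A constant is added to `H` to make it positive, so that the gentle estimate applies.
lemma eventually_exists_isState_mul_sub_le_rtr {E : Matrix n n ℂ →ₗ[ℂ] Matrix m m ℂ}
    (hE : IsQChannel E) {ρ σ : Matrix n n ℂ} (hρ : IsState ρ) (hσ : σ.PosDef)
    {H : Matrix m m ℂ} (hH : H.IsHermitian) {ε : ℝ} (hε : 0 < ε) :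
    ∀ᶠ k : ℕ in atTop, ∃ ν, IsState ν ∧
      ν ≤ (2 : ℝ) ^ (k * (rtr (ρ * (mlog ρ - mlog σ)) + ε)) • tpowMat σ k ∧
      k * (rtr (E ρ * H) - ε) ≤ rtr (tpowChannel E k ν * localSum H k) := by
  obtain ⟨h, -, hHh⟩ := exists_le_smul_one hH.neg
  have hH' : 0 ≤ H + h • 1 := neg_le_iff_add_nonneg'.1 hHh
  obtain ⟨C, hC, hHC⟩ := exists_le_smul_one hH'.posSemidef.isHermitian
  have hEρ := hE.isState hρ
  set x := rtr (E ρ * H)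
  have hx : rtr (E ρ * (H + h • 1)) = x + h := by
    rw [mul_add, mul_smul_one, rtr_add, rtr_smul, hEρ.rtr_eq_one, mul_one]
  have hxh : 0 ≤ x + h := hx ▸ rtr_mul_nonneg hEρ.nonneg hH'
  obtain ⟨δ, hδ, hδ', hδε⟩ : ∃ δ > 0, δ ≤ 1 / 4 ∧ (x + h + C + 3) * δ ≤ ε := by
    have hpos : 0 < x + h + C + 3 := by positivity
    refine ⟨min (1 / 4) (ε / (x + h + C + 3)), by positivity, min_le_left _ _, ?_⟩
    rw [mul_comm, ← le_div_iff₀ hpos]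
    exact min_le_right _ _
  filter_upwards [eventually_exists_isState_le_smul_tpowMat hρ hσ hδ hδ'] with k ⟨ν, hν, hνσ, hf⟩
  refine ⟨ν, hν, hνσ.trans (smul_le_smul_of_nonneg_right ?_
    (tpowMat_nonneg hσ.posSemidef.nonneg k)), ?_⟩
  · refine Real.rpow_le_rpow_of_exponent_le one_le_two ?_
    gcongr
    nlinarith
  · have hfν := hf (outputExpectation hE.isCP hH' k) (k * C) (by positivity)
      fun X => outputExpectation_le hE hH' hHC k
    rw [outputExpectation_tpowMat hE hH' hρ, outputExpectation_apply,
      rtr_mul_localSum_add_smul_one, ((hE.tpowChannel k).isState hν).rtr_eq_one, hx] at hfν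
    have hloss : k * ((x + h + C) * δ) ≤ k * ε := by
      gcongr
      linarith
    linarith

-- The chain rule before optimising over the test operator `θ`, with `log θ - log T` as the
-- observable that the typical input is designed for.
lemma rtr_map_mul_mlog_sub_mlog_le {E F : Matrix n n ℂ →ₗ[ℂ] Matrix m m ℂ} (hE : IsQChannel E)
    (hF : IsCP F) {ρ σ : Matrix n n ℂ} (hρ : IsState ρ) (hσ : σ.PosDef) {T θ : Matrix m m ℂ}
    (hT : T.PosDef) (hFT : F σ ≤ T) (hθ : θ.PosDef) {R : ℝ} (hR : regRelEntropy E F ≤ R) :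
    rtr (E ρ * (mlog θ - mlog T)) ≤
      rtr (ρ * (mlog ρ - mlog σ)) + R + Real.logb 2 (rtr θ) := by
  have hH := (isHermitian_mlog θ).sub (isHermitian_mlog T)
  refine le_of_forall_pos_le_add fun ε hε => ?_
  obtain ⟨k, ⟨ν, hν, hνσ, hkν⟩, hk⟩ := ((eventually_exists_isState_mul_sub_le_rtr hE hρ hσ hH
    (half_pos hε)).and (eventually_ge_atTop 1)).exists
  set D := rtr (ρ * (mlog ρ - mlog σ))
  have hFk := hF.tpowChannel k
  have hFν : tpowChannel F k ν ≤ (2 : ℝ) ^ (k * (D + ε / 2)) • tpowMat T k := calc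
    tpowChannel F k ν ≤ tpowChannel F k ((2 : ℝ) ^ (k * (D + ε / 2)) • tpowMat σ k) := hFk.mono hνσ
    _ = (2 : ℝ) ^ (k * (D + ε / 2)) • tpowMat (F σ) k := by
      rw [LinearMap.map_smul_of_tower, tpowChannel_tpowMat]
    _ ≤ (2 : ℝ) ^ (k * (D + ε / 2)) • tpowMat T k :=
      smul_le_smul_of_nonneg_left (tpowMat_mono (hF.map_nonneg hσ.posSemidef.nonneg) hFT k)
        (Real.rpow_nonneg two_pos.le _)
  have hle := hkν.trans <| rtr_mul_localSum_mlog_sub_mlog_le ((hE.tpowChannel k).isState hν)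
    (hFk.map_nonneg hν.nonneg) hT hθ (Real.rpow_pos_of_pos two_pos _) hFν
    (relEntropy_tpowChannel_le hE.isCP hF hR hk hν)
  rw [Real.logb_rpow two_pos (OfNat.ofNat_ne_one 2), ← mul_add, ← mul_add] at hle
  linarith [le_of_mul_le_mul_left hle (Nat.cast_pos.2 hk)]

lemma rtr_mul_mlog_sub_add_smul_le {E F : Matrix n n ℂ →ₗ[ℂ] Matrix m m ℂ} (hE : IsQChannel E)
    (hF : IsCP F) {ρ σ : Matrix n n ℂ} (hρ : IsState ρ) (hσ : 0 ≤ σ) (hρσ : SuppLE ρ σ)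
    {R : ℝ} (hR : regRelEntropy E F ≤ R) {η : ℝ} (hη : 0 < η) :
    rtr (E ρ * mlog (E ρ)) - rtr (E ρ * mlog (F σ + η • 1)) ≤
      rtr (ρ * (mlog ρ - mlog σ)) + R + Real.logb 2 (1 + η * Fintype.card m) := by
  have hEρ := hE.isState hρ
  have hFσ := hF.map_nonneg hσ
  obtain ⟨c, hc, hFc⟩ := exists_le_smul_one (hF.map_nonneg zero_le_one).posSemidef.isHermitian
  obtain ⟨κ, hκ, hκη⟩ : ∃ κ > 0, κ * c ≤ η :=
    ⟨η / (c + 1), by positivity, by rw [div_mul_eq_mul_div, div_le_iff₀ (by positivity)]; nlinarith⟩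
  have hFT : F (σ + κ • 1) ≤ F σ + η • 1 := by
    rw [map_add, LinearMap.map_smul_of_tower]
    gcongr
    calc κ • F 1 ≤ κ • c • 1 := smul_le_smul_of_nonneg_left hFc hκ.le
      _ = (κ * c) • 1 := smul_smul ..
      _ ≤ η • 1 := smul_le_smul_of_nonneg_right hκη zero_le_one
  have hdual := rtr_map_mul_mlog_sub_mlog_le hE hF hρ (posDef_add_smul_one hσ hκ)
    (posDef_add_smul_one hFσ hη) hFT (posDef_add_smul_one hEρ.nonneg hη) hR
  have htr : rtr (E ρ + η • 1) = 1 + η * Fintype.card m := by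
    rw [rtr_add, rtr_smul, hEρ.rtr_eq_one, rtr, trace_one, Complex.natCast_re]
  rw [htr] at hdual
  simp only [mul_sub, rtr_sub] at hdual ⊢
  linarith [rtr_mul_mlog_le_add_smul hρ.nonneg hσ hρσ hκ,
    rtr_mul_mlog_le_add_smul hEρ.nonneg hEρ.nonneg (fun _ => id) hη]

lemma relEntropy_map_le {E F : Matrix n n ℂ →ₗ[ℂ] Matrix m m ℂ} (hE : IsQChannel E)
    (hF : IsCP F) {ρ σ : Matrix n n ℂ} (hρ : IsState ρ) (hσ : 0 ≤ σ) (hρσ : SuppLE ρ σ)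
    {R : ℝ} (hR : regRelEntropy E F ≤ R) :
    relEntropy (E ρ) (F σ) ≤ (rtr (ρ * (mlog ρ - mlog σ)) + R : ℝ) := by
  have hlim : Tendsto (fun η : ℝ => rtr (ρ * (mlog ρ - mlog σ)) + R +
      Real.logb 2 (1 + η * Fintype.card m)) (𝓝[>] 0) (𝓝 (rtr (ρ * (mlog ρ - mlog σ)) + R)) := by
    have hcont : ContinuousAt (fun η : ℝ => rtr (ρ * (mlog ρ - mlog σ)) + R +
        Real.logb 2 (1 + η * Fintype.card m)) 0 :=
      continuousAt_const.add (.logb (by fun_prop) (by simp))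
    simpa using hcont.tendsto.mono_left nhdsWithin_le_nhds
  exact relEntropy_le_of_tendsto (hE.isState hρ).nonneg (hF.map_nonneg hσ) hlim
    fun η hη => rtr_mul_mlog_sub_add_smul_le hE hF hρ hσ hρσ hR hη

theorem relEntropy_chain_rule_general {E F : Matrix n n ℂ →ₗ[ℂ] Matrix m m ℂ}
    (hE : IsQChannel E) (hF : IsCP F) {ρ σ : Matrix n n ℂ} (hρ : IsState ρ)
    (hσ : σ.PosSemidef) : relEntropy (E ρ) (F σ) ≤ relEntropy ρ σ + regRelEntropy E F := by
  have hbot := regRelEntropy_ne_bot hE.isCP hF hρ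
  by_cases hsupp : SuppLE ρ σ
  · rw [relEntropy.eq_def ρ σ, if_pos hsupp]
    by_cases htop : regRelEntropy E F = ⊤
    · rw [htop, EReal.coe_add_top]
      exact le_top
    · obtain ⟨R, hR⟩ : ∃ R : ℝ, (R : EReal) = regRelEntropy E F :=
        ⟨_, EReal.coe_toReal htop hbot⟩
      rw [← hR, ← EReal.coe_add]
      exact relEntropy_map_le hE hF hρ hσ.nonneg hsupp hR.ge
  · rw [relEntropy.eq_def ρ σ, if_neg hsupp, EReal.top_add_of_ne_bot hbot]
    exact le_top

end ChainRule

/-- Chain rule for the quantum relative entropy. -/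
theorem relEntropy_chain_rule {dA dB : ℕ}
    (E F : Matrix (Fin dA) (Fin dA) ℂ →ₗ[ℂ] Matrix (Fin dB) (Fin dB) ℂ)
    (hE : IsQChannel E) (hF : IsQChannel F)
    (ρ σ : Matrix (Fin dA) (Fin dA) ℂ) (hρ : IsState ρ) (hσ : IsState σ) :
    relEntropy (E ρ) (F σ) ≤ relEntropy ρ σ + regRelEntropy E F :=
  relEntropy_chain_rule_general hE hF.isCP hρ hσ.1

end QCD
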